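/- arXiv:2510.03176 — 8 statements merged into one kernel-verified Lean document; each statement's English description precedes it below -/
import Mathlib

section
/- Let d = (d_1, …, d_n) be a non-increasing sequence of positive integers and let γ ≥ 1. If there exists a simple graph on vertex set {1, …, n} realizing d that has a dominating set of size γ, then there exists a simple graph on vertex set {1, …, n} realizing d in which the prefix set {1, …, γ} (the γ vertices of highest degree) is a dominating set. -/
/-!
The proof moves a dominating set `D` towards the prefix one vertex at a time. If `D` is not the
prefix, there are `u ∈ D` and `v ∉ D` with `v < u`, so `d u ≤ d v`. It is enough to find a
realization dominated by `D - u + w` for some `w ∉ D` with `w < u` (`exists_exchange`), since the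
sum of the indices in `D` then drops (`exists_prefix_dominated`).

Every change of realization is a degree-preserving exchange (`exists_toggle`): two vertices `u`, `v`
trade equally many private neighbours. Handing to `v` all vertices outside `D` that are adjacent to
`u` but not to `v` makes `D - u + v` dominate everything except possibly `u`
(`dominates_of_toggle`). The vertex `u` is dominated too if it is adjacent to `v` or to another
vertex of `D`, or if it receives in the trade the vertex `y ∈ D` dominating `v`. What remains is the
case where the trade is empty, i.e. `u` is not adjacent to `v` and `N(u) ⊆ N(v) \ D`. Then either an
exchange of the edges `uw`, `vz` for `uv`, `wz` works, or each `w ∈ N(u)` is adjacent to `u`, `v`,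
and all of `N(v) \ {w}`. In the latter situation `d w > d v ≥ d u`, so `w < u`, and `D - u + w`
already dominates the graph, because `y` is adjacent to all of `N(u)`.
-/

open Classical in
/-- Degree-preserving exchange: `u` gives its neighbours `A` to `v` and receives `B` in return. -/
lemma exists_toggle {V : Type*} [Fintype V] (G : SimpleGraph V) {u v : V} (huv : u ≠ v)
    (A B : Finset V) (hcard : A.card = B.card)
    (hA : ∀ a ∈ A, G.Adj u a ∧ ¬ G.Adj v a ∧ a ≠ v)
    (hB : ∀ b ∈ B, G.Adj v b ∧ ¬ G.Adj u b ∧ b ≠ u) :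
    ∃ G' : SimpleGraph V, (∀ x, G'.degree x = G.degree x) ∧
      (∀ x y, x ≠ u → x ≠ v → y ≠ u → y ≠ v → (G'.Adj x y ↔ G.Adj x y)) ∧
      (∀ y, G'.Adj u y ↔ (G.Adj u y ∧ y ∉ A) ∨ y ∈ B) ∧
      (∀ y, G'.Adj v y ↔ (G.Adj v y ∧ y ∉ B) ∨ y ∈ A) := by
  have huA : u ∉ A := fun h => G.loopless.irrefl u (hA u h).1
  have hvB : v ∉ B := fun h => G.loopless.irrefl v (hB v h).1
  have hvA : v ∉ A := fun h => (hA v h).2.2 rfl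
  have huB : u ∉ B := fun h => (hB u h).2.2 rfl
  have hAB : ∀ x ∈ A, x ∉ B := fun x h h' => (hB x h').2.1 (hA x h).1
  let R : V → V → Prop := fun x y => (x = u ∨ x = v) ∧ (y ∈ A ∨ y ∈ B)
  let G' : SimpleGraph V :=
    { Adj := fun x y => Xor (G.Adj x y) (R x y ∨ R y x)
      symm := ⟨fun x y h => by
        simp only [G.adj_comm y x, or_comm (a := R y x)]; exact h⟩
      loopless := ⟨fun x h => by
        have := G.loopless.irrefl x
        simp only [R, Xor] at h
        grind⟩ }
  have e1 : ∀ x y, x ≠ u → x ≠ v → y ≠ u → y ≠ v → (G'.Adj x y ↔ G.Adj x y) := by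
    intro x y h1 h2 h3 h4
    simp only [G', R, Xor, h1, h2, h3, h4]
    simp
  have e2 : ∀ y, G'.Adj u y ↔ (G.Adj u y ∧ y ∉ A) ∨ y ∈ B := by
    intro y
    have := hA y
    have := hB y
    simp only [G', R, Xor]
    grind
  have e3 : ∀ y, G'.Adj v y ↔ (G.Adj v y ∧ y ∉ B) ∨ y ∈ A := by
    intro y
    have := hA y
    have := hB y
    simp only [G', R, Xor]
    grind
  -- The concrete adjacency relation is forgotten so that all decidability instances agree.
  clear_value G'
  refine ⟨G', fun x => ?_, e1, e2, e3⟩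
  simp only [← SimpleGraph.card_neighborFinset_eq_degree]
  by_cases hxu : x = u
  · subst hxu
    have h1 : G'.neighborFinset x = (G.neighborFinset x \ A) ∪ B := by
      ext y; simp [e2]
    have hsub : A ⊆ G.neighborFinset x := fun a ha => by simpa using (hA a ha).1
    rw [h1, Finset.card_union_of_disjoint, Finset.card_sdiff_of_subset hsub, ← hcard,
      Nat.sub_add_cancel (Finset.card_le_card hsub)]
    rw [Finset.disjoint_left]
    intro a ha hb
    exact (hB a hb).2.1 (by simpa using (Finset.mem_sdiff.1 ha).1)
  by_cases hxv : x = v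
  · subst hxv
    have h1 : G'.neighborFinset x = (G.neighborFinset x \ B) ∪ A := by
      ext y; simp [e3]
    have hsub : B ⊆ G.neighborFinset x := fun a ha => by simpa using (hB a ha).1
    rw [h1, Finset.card_union_of_disjoint, Finset.card_sdiff_of_subset hsub, hcard,
      Nat.sub_add_cancel (Finset.card_le_card hsub)]
    rw [Finset.disjoint_left]
    intro a ha hb
    exact (hA a hb).2.1 (by simpa using (Finset.mem_sdiff.1 ha).1)
  have key : ∀ y, G'.Adj x y ↔ if y = u then G'.Adj u x else if y = v then G'.Adj v x
      else G.Adj x y := by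
    intro y
    split_ifs with h1 h2
    · rw [h1, G'.adj_comm]
    · rw [h2, G'.adj_comm]
    · exact e1 x y hxu hxv h1 h2
  by_cases hxA : x ∈ A
  · have h1 : G'.neighborFinset x = insert v ((G.neighborFinset x).erase u) := by
      ext y
      have := hA x hxA
      simp only [SimpleGraph.mem_neighborFinset, key, e2, e3, Finset.mem_insert, Finset.mem_erase]
      grind
    have hu : u ∈ G.neighborFinset x := by simpa using (hA x hxA).1.symm
    have hv : v ∉ (G.neighborFinset x).erase u := fun h =>
      (hA x hxA).2.1 (by simpa using (G.mem_neighborFinset x v).1 (Finset.mem_of_mem_erase h) |>.symm)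
    rw [h1, Finset.card_insert_of_notMem hv, Finset.card_erase_add_one hu]
  by_cases hxB : x ∈ B
  · have h1 : G'.neighborFinset x = insert u ((G.neighborFinset x).erase v) := by
      ext y
      have := hB x hxB
      simp only [SimpleGraph.mem_neighborFinset, key, e2, e3, Finset.mem_insert, Finset.mem_erase]
      grind
    have hu : v ∈ G.neighborFinset x := by simpa using (hB x hxB).1.symm
    have hv : u ∉ (G.neighborFinset x).erase v := fun h =>
      (hB x hxB).2.1 (by simpa using (G.mem_neighborFinset x u).1 (Finset.mem_of_mem_erase h) |>.symm)
    rw [h1, Finset.card_insert_of_notMem hv, Finset.card_erase_add_one hu]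
  · congr 1
    ext y
    simp only [SimpleGraph.mem_neighborFinset, key, e2, e3]
    have := G.adj_comm x y
    grind

open Classical in
/-- If `u` trades all its neighbours outside `D` that are not neighbours of `v` for a set `B`, then
`v` can replace `u` in the dominating set `D`, provided `u` itself remains dominated. -/
lemma dominates_of_toggle {V : Type*} [Fintype V] [DecidableEq V] (G : SimpleGraph V) (D : Finset V)
    (hD : ∀ x ∉ D, ∃ t ∈ D, G.Adj t x) {u v : V} (hu : u ∈ D) (hv : v ∉ D) (B : Finset V)
    (hcard : (((G.neighborFinset u \ G.neighborFinset v).erase v) \ D).card = B.card)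
    (hB : ∀ b ∈ B, G.Adj v b ∧ ¬ G.Adj u b ∧ b ≠ u)
    (hdom : G.Adj v u ∨ ∃ t ∈ D, t ≠ u ∧ (G.Adj u t ∨ t ∈ B)) :
    ∃ G' : SimpleGraph V, (∀ x, G'.degree x = G.degree x) ∧
      ∀ x ∉ insert v (D.erase u), ∃ t ∈ insert v (D.erase u), G'.Adj t x := by
  have huv : u ≠ v := fun h => hv (h ▸ hu)
  obtain ⟨G', hdeg, e1, e2, e3⟩ := exists_toggle G huv
    ((((G.neighborFinset u) \ (G.neighborFinset v)).erase v) \ D) B hcard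
    (fun a ha => by simp at ha; tauto) hB
  refine ⟨G', hdeg, fun x hx => ?_⟩
  simp only [Finset.mem_insert, Finset.mem_erase, not_or, not_and] at hx
  by_cases hxu : x = u
  · subst hxu
    rcases hdom with h | ⟨t, ht, htx, h⟩
    · refine ⟨v, by simp, (e3 x).2 (Or.inl ⟨h, fun hb => (hB x hb).2.2 rfl⟩)⟩
    · refine ⟨t, by simp [ht, htx], ((e2 t).2 ?_).symm⟩
      rcases h with h | h
      · exact Or.inl ⟨h, by simp [ht]⟩
      · exact Or.inr h
  · have hxD : x ∉ D := hx.2 hxu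
    obtain ⟨t, ht, htx⟩ := hD x hxD
    by_cases htu : t = u
    · subst htu
      refine ⟨v, by simp, (e3 x).2 ?_⟩
      by_cases hvx : G.Adj v x
      · exact Or.inl ⟨hvx, fun hb => (hB x hb).2.1 htx⟩
      · exact Or.inr (by simp [hvx, hxD, htx, hx.1])
    · exact ⟨t, by simp [ht, htu], (e1 t x htu (fun h => hv (h ▸ ht)) hxu hx.1).2 htx⟩

open Classical in
/-- A vertex `u` of a dominating set can be replaced by a smaller vertex outside it, in a possibly
different realization, as soon as some smaller vertex `v` is outside. The replacement need not be
`v`. -/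
lemma exists_exchange {n : ℕ} (d : Fin n → ℕ) (hpos : ∀ i, 0 < d i) (hmono : Antitone d)
    (G : SimpleGraph (Fin n)) (hG : ∀ i, G.degree i = d i) (D : Finset (Fin n))
    (hD : ∀ x ∉ D, ∃ t ∈ D, G.Adj t x) {u v : Fin n} (hu : u ∈ D) (hv : v ∉ D) (hvu : v < u) :
    ∃ (G' : SimpleGraph (Fin n)) (w : Fin n), (∀ i, G'.degree i = d i) ∧ w ∉ D ∧ w < u ∧
      ∀ x ∉ insert w (D.erase u), ∃ t ∈ insert w (D.erase u), G'.Adj t x := by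
  set A := (((G.neighborFinset u) \ (G.neighborFinset v)).erase v) \ D with hAdef
  set C := ((G.neighborFinset v) \ (G.neighborFinset u)).erase u with hCdef
  have hC : ∀ b ∈ C, G.Adj v b ∧ ¬ G.Adj u b ∧ b ≠ u := by
    intro b hb; simp [C] at hb; tauto
  have hle : A.card ≤ C.card := by
    have h1 : ((G.neighborFinset u) \ (G.neighborFinset v)).card ≤
        ((G.neighborFinset v) \ (G.neighborFinset u)).card := by
      rw [Finset.card_sdiff_le_card_sdiff_iff, G.card_neighborFinset_eq_degree,
        G.card_neighborFinset_eq_degree, hG, hG]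
      exact hmono hvu.le
    refine (Finset.card_le_card Finset.sdiff_subset).trans ?_
    have hc := G.adj_comm u v
    simp only [C, Finset.card_erase_eq_ite, Finset.mem_sdiff, SimpleGraph.mem_neighborFinset,
      SimpleGraph.irrefl, not_false_eq_true, and_true, hc]
    split_ifs <;> omega
  have fin1 : ∀ B ⊆ C, A.card = B.card →
      (G.Adj v u ∨ ∃ t ∈ D, t ≠ u ∧ (G.Adj u t ∨ t ∈ B)) →
      ∃ (G' : SimpleGraph (Fin n)) (w : Fin n), (∀ i, G'.degree i = d i) ∧ w ∉ D ∧ w < u ∧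
      ∀ x ∉ insert w (D.erase u), ∃ t ∈ insert w (D.erase u), G'.Adj t x := by
    intro B hBC hc hdom
    obtain ⟨G', h1, h2⟩ := dominates_of_toggle G D hD hu hv B hc (fun b hb => hC b (hBC hb)) hdom
    exact ⟨G', v, fun i => (h1 i).trans (hG i), hv, hvu, h2⟩
  by_cases hadj : G.Adj v u ∨ ∃ t ∈ D, t ≠ u ∧ G.Adj u t
  · obtain ⟨B, hBC, hB⟩ := Finset.exists_subset_card_eq hle
    refine fin1 B hBC hB.symm ?_
    rcases hadj with h | ⟨t, ht, h1, h2⟩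
    · exact Or.inl h
    · exact Or.inr ⟨t, ht, h1, Or.inl h2⟩
  push Not at hadj
  obtain ⟨hnvu, hnD⟩ := hadj
  obtain ⟨y, hyD, hyv⟩ := hD v hv
  have hyu : y ≠ u := by rintro rfl; exact hnvu hyv.symm
  have hnuy : ¬ G.Adj u y := hnD y hyD hyu
  by_cases hne : A.Nonempty
  · have hyC : {y} ⊆ C := by simp [C, hyu, hyv.symm, hnuy]
    obtain ⟨B, hyB, hBC, hB⟩ := Finset.exists_subsuperset_card_eq hyC
      (by simpa using hne.card_pos) hle
    exact fin1 B hBC hB.symm (Or.inr ⟨y, hyD, hyu, Or.inr (by simpa using hyB)⟩)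
  have hNuD : ∀ w, G.Adj u w → w ∉ D := fun w hw hwD =>
    hnD w hwD (fun h => G.loopless.irrefl u (h ▸ hw)) hw
  have hNuv : ∀ w, G.Adj u w → G.Adj v w := by
    intro w hw
    by_contra hvw
    apply hne
    refine ⟨w, ?_⟩
    have : w ≠ v := by rintro rfl; exact hnvu hw.symm
    simp [A, hw, hvw, this, hNuD w hw]
  by_cases hsw : ∃ w z, G.Adj u w ∧ G.Adj v z ∧ z ≠ w ∧ ¬ G.Adj w z ∧
      (z ∈ D ∨ ∃ t ∈ D, t ≠ u ∧ G.Adj t z)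
  · -- The edges `uw`, `vz` are replaced by `uv`, `wz`: `u` hands `w` to `z` in return for `v`.
    obtain ⟨w, z, huw, hvz, hzw, hnwz, hz⟩ := hsw
    have hzu : z ≠ u := by rintro rfl; exact hnvu hvz
    have hzv : z ≠ v := hvz.ne'
    obtain ⟨G', hdeg, e1, e2, e3⟩ := exists_toggle G hzu.symm {w} {v} (by simp)
      (by simp [huw, hzw.symm, G.adj_comm z w, hnwz])
      (by simp [hvz.symm, hvu.ne, G.adj_comm u v, hnvu])
    refine ⟨G', v, fun i => (hdeg i).trans (hG i), hv, hvu, fun x hx => ?_⟩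
    simp only [Finset.mem_insert, Finset.mem_erase, not_or, not_and] at hx
    by_cases hxu : x = u
    · exact ⟨v, by simp, by rw [hxu, G'.adj_comm, e2]; simp⟩
    have hxD := hx.2 hxu
    by_cases hxz : x = z
    · subst hxz
      obtain ⟨t, ht, htu, htx⟩ := hz.resolve_left hxD
      refine ⟨t, by simp [ht, htu], ?_⟩
      rw [G'.adj_comm, e3]
      exact Or.inl ⟨htx.symm, by rintro h; exact hv (by simpa using (Finset.mem_singleton.1 h) ▸ ht)⟩
    obtain ⟨t, ht, htx⟩ := hD x hxD
    by_cases htu : t = u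
    · subst htu
      exact ⟨v, by simp, (e1 v x hvu.ne hzv.symm hxu hxz).2 (hNuv x htx)⟩
    refine ⟨t, by simp [ht, htu], ?_⟩
    by_cases htz : t = z
    · subst htz
      exact (e3 x).2 (Or.inl ⟨htx, by simpa using hx.1⟩)
    · exact (e1 t x htu htz hxu hxz).2 htx
  · push Not at hsw
    have hyN : ∀ w, G.Adj u w → G.Adj w y := fun w hw => by
      by_contra h
      exact (hsw w y hw hyv.symm (fun e => hNuD w hw (e ▸ hyD)) h).1 hyD
    obtain ⟨w, huw⟩ : ∃ w, G.Adj u w :=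
      (G.degree_pos_iff_exists_adj u).1 (by rw [hG]; exact hpos u)
    have hsub : insert u (insert v ((G.neighborFinset v).erase w)) ⊆ G.neighborFinset w := by
      intro z hz
      simp only [Finset.mem_insert, Finset.mem_erase, SimpleGraph.mem_neighborFinset] at hz ⊢
      rcases hz with rfl | rfl | ⟨hzw, hvz⟩
      · exact huw.symm
      · exact (hNuv w huw).symm
      · by_contra h
        obtain ⟨h1, h2⟩ := hsw w z huw hvz hzw h
        obtain ⟨t, ht, htz⟩ := hD z h1
        by_cases htu : t = u
        · exact h2 y hyD hyu (hyN z (htu ▸ htz)).symm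
        · exact h2 t ht htu htz
    have hcard := Finset.card_le_card hsub
    rw [Finset.card_insert_of_notMem (by simp [hvu.ne', hnvu]),
      Finset.card_insert_of_notMem (by simp),
      Finset.card_erase_add_one (by simpa using hNuv w huw),
      G.card_neighborFinset_eq_degree, G.card_neighborFinset_eq_degree, hG, hG] at hcard
    have hwu : w < u := by
      by_contra h
      have h1 := hmono (not_lt.1 h)
      have h2 := hmono hvu.le
      omega
    refine ⟨G, w, hG, hNuD w huw, hwu, fun x hx => ?_⟩
    simp only [Finset.mem_insert, Finset.mem_erase, not_or, not_and] at hx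
    by_cases hxu : x = u
    · exact ⟨w, by simp, hxu ▸ huw.symm⟩
    obtain ⟨t, ht, htx⟩ := hD x (hx.2 hxu)
    by_cases htu : t = u
    · exact ⟨y, by simp [hyD, hyu], (hyN x (htu ▸ htx)).symm⟩
    · exact ⟨t, by simp [ht, htu], htx⟩

open Classical in
lemma exists_prefix_dominated {n γ : ℕ} (d : Fin n → ℕ) (hpos : ∀ i, 0 < d i)
    (hmono : Antitone d) (s : ℕ) : ∀ (G : SimpleGraph (Fin n)) (D : Finset (Fin n)),
    (∀ i, G.degree i = d i) → D.card = γ → (∀ x ∉ D, ∃ t ∈ D, G.Adj t x) →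
    ∑ i ∈ D, i.val = s →
    ∃ G : SimpleGraph (Fin n), (∀ i, G.degree i = d i) ∧
      ∀ v : Fin n, γ ≤ v.val → ∃ u : Fin n, u.val < γ ∧ G.Adj u v := by
  induction s using Nat.strong_induction_on with
  | _ s ih =>
  intro G D hG hc hD hs
  by_cases hall : ∀ u ∈ D, u.val < γ
  · refine ⟨G, hG, fun v hv => ?_⟩
    obtain ⟨t, ht, h⟩ := hD v (fun h => absurd (hall v h) (by omega))
    exact ⟨t, hall t ht, h⟩
  push Not at hall
  obtain ⟨u, hu, huγ⟩ := hall
  obtain ⟨v, hvγ, hv⟩ : ∃ v : Fin n, v.val < γ ∧ v ∉ D := by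
    by_contra! hcon
    have hsub : insert u (Finset.Iio (⟨γ, by omega⟩ : Fin n)) ⊆ D := by
      intro x hx
      rcases Finset.mem_insert.1 hx with rfl | hx
      · exact hu
      · exact hcon x (by simpa [Fin.lt_def] using hx)
    have := Finset.card_le_card hsub
    rw [Finset.card_insert_of_notMem (by simp [Fin.le_def, huγ]), Fin.card_Iio, hc] at this
    simp at this
  obtain ⟨G', w, hG', hw, hwu, hdom⟩ := exists_exchange d hpos hmono G hG D hD hu hv
    (Fin.lt_def.2 (by omega))
  have hwE : w ∉ D.erase u := fun h => hw (Finset.mem_of_mem_erase h)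
  refine ih _ ?_ G' (insert w (D.erase u)) hG' ?_ hdom rfl
  · rw [Finset.sum_insert hwE, ← hs, ← Finset.add_sum_erase D _ hu]
    have := Fin.lt_def.1 hwu
    omega
  · rw [Finset.card_insert_of_notMem hwE, Finset.card_erase_add_one hu, hc]

/-- **Prefix Lemma for Minimum Dominating Set.**
If a non-increasing positive sequence `d` has a realization with a dominating set
of size `γ ≥ 1`, then it has a realization in which the `γ` vertices of highest
degree (the prefix `{0, …, γ-1}` in 0-based indexing) form a dominating set. -/
theorem stmt_0 (n γ : ℕ) (hγ : 1 ≤ γ) (d : Fin n → ℕ)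
    (hpos : ∀ i, 0 < d i) (hmono : Antitone d)
    (h : ∃ (G : SimpleGraph (Fin n)) (_ : DecidableRel G.Adj),
      (∀ i, G.degree i = d i) ∧
      ∃ D : Finset (Fin n), D.card = γ ∧ ∀ v ∉ D, ∃ u ∈ D, G.Adj u v) :
    ∃ (G : SimpleGraph (Fin n)) (_ : DecidableRel G.Adj),
      (∀ i, G.degree i = d i) ∧
      ∀ v : Fin n, γ ≤ v.val → ∃ u : Fin n, u.val < γ ∧ G.Adj u v := by
  classical
  obtain ⟨G, _, hG, D, hc, hD⟩ := h
  obtain ⟨G', h1, h2⟩ := exists_prefix_dominated (γ := γ) d hpos hmono _ G D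
    (fun i => by rw [← hG i]; convert rfl) hc hD rfl
  exact ⟨G', Classical.decRel _, fun i => by rw [← h1 i], h2⟩
end

section
/- Let d = (d_1, …, d_n) be a non-increasing sequence of positive integers and let γ ∈ {1, …, n}. If there exists a simple graph on vertex set {1, …, n} realizing d that has a dominating set of size γ, then for every k ∈ {0, 1, …, n−γ}: Σ_{i=γ+1}^{γ+k} (d_i − 1) ≤ k(k−1) − (n−γ) + Σ_{i=1}^{γ} d_i + Σ_{i=γ+k+1}^{n} min{k, d_i − 1} (an inequality over the integers). -/
/-!
Fix a dominating set `D` of size `γ` and give each vertex one of three classes: dominator (in `D`),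
selected (in a `k`-set `S` disjoint from `D`), or remaining. A dominator of degree `x` has weight
`x`, a selected vertex `1 - x`, a remaining vertex `min k (x - 1)`. The claim says that when the
classes occupy the positions `1..γ`, `γ+1..γ+k`, `γ+k+1..n` of the degree sequence, the total
weight is at least `n - γ - k(k-1)`.

For every choice of `D` (dominating) and `S` (disjoint from `D`, of size `k`) this lower bound holds
by double counting edges between the three classes, using that each vertex outside `D` has a
neighbour in `D` (`domination_count`). To pass to the sorted classes, pair the vertices of `D` that
are not among the first `γ` with those among the first `γ` not in `D`, giving an involution
(`exists_swap_involution`), and let `S` be the image of the positions `γ+1..γ+k`. Undoing a swap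
gives the dominator slot the larger of two degrees; since `x ↦ x - (weight of x in another class)`
is monotone, this never decreases the total weight (`sum_weight_involution_le`).
-/

/-- The contribution of a vertex of degree `x`, where the propositions `p` and `q` say that it is a
dominator, respectively a selected vertex; `p` takes precedence. -/
def degWeight (k : ℤ) (p q : Prop) [Decidable p] [Decidable q] (x : ℤ) : ℤ :=
  if p then x else if q then 1 - x else min k (x - 1)

theorem sum_adj_count_comm {V : Type*} (G : SimpleGraph V) [DecidableRel G.Adj]
    (X Y : Finset V) :
    ∑ v ∈ X, ((Y.filter (G.Adj v)).card : ℤ) = ∑ v ∈ Y, ((X.filter (G.Adj v)).card : ℤ) := by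
  have h := Finset.sum_card_bipartiteAbove_eq_sum_card_bipartiteBelow (s := X) (t := Y) G.Adj
  simp only [Finset.bipartiteAbove, Finset.bipartiteBelow] at h
  simp only [G.adj_comm] at h ⊢
  exact_mod_cast h

/-- The inequality for an arbitrary dominating set `D` and an arbitrary set `S` disjoint from it,
obtained by counting edges between `D`, `S` and the remaining vertices. -/
theorem domination_count {V : Type*} [Fintype V] [DecidableEq V] (G : SimpleGraph V)
    [DecidableRel G.Adj] (D S : Finset V) (hDS : Disjoint D S)
    (hD : ∀ v ∉ D, ∃ u ∈ D, G.Adj u v) :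
    (Fintype.card V : ℤ) - D.card - S.card * (S.card - 1) ≤
      ∑ v, degWeight S.card (v ∈ D) (v ∈ S) (G.degree v) := by
  set R : Finset V := (D ∪ S)ᶜ with hR
  have hsplit : ∀ f : V → ℤ, ∑ v, f v = ∑ v ∈ D, f v + ∑ v ∈ S, f v + ∑ v ∈ R, f v := by
    intro f
    rw [← Finset.sum_union hDS, hR, Finset.sum_add_sum_compl]
  have hcard : (Fintype.card V : ℤ) = D.card + S.card + R.card := by
    simpa using hsplit (fun _ => 1)
  set e : Finset V → V → ℤ := fun X v => ((X.filter (G.Adj v)).card : ℤ) with he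
  have hcomm : ∀ X Y, ∑ v ∈ X, e Y v = ∑ v ∈ Y, e X v := sum_adj_count_comm G
  have hdeg : ∀ v, (G.degree v : ℤ) = e D v + e S v + e R v := by
    intro v
    have h := hsplit (fun u => if G.Adj v u then 1 else 0)
    simp only [Finset.sum_boole] at h
    rw [← h, ← G.card_neighborFinset_eq_degree, G.neighborFinset_eq_filter]
  have he0 : ∀ X v, 0 ≤ e X v := fun X v => Nat.cast_nonneg _
  have hdom : ∀ v ∉ D, 1 ≤ e D v := by
    intro v hv
    obtain ⟨u, hu, huv⟩ := hD v hv
    have : 0 < (D.filter (G.Adj v)).card :=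
      Finset.card_pos.2 ⟨u, Finset.mem_filter.2 ⟨hu, huv.symm⟩⟩
    simp only [he]
    exact_mod_cast this
  have heS : ∀ v, e S v ≤ S.card := fun v =>
    Int.ofNat_le.2 (Finset.card_filter_le _ _)
  -- no loops: a selected vertex has at most `#S - 1` selected neighbours
  have heSS : ∀ v ∈ S, e S v ≤ S.card - 1 := by
    intro v hv
    have : (S.filter (G.Adj v)).card < S.card :=
      Finset.card_lt_card (Finset.filter_ssubset.2 ⟨v, hv, G.loopless.irrefl v⟩)
    have h2 : e S v < S.card := Int.ofNat_lt.2 this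
    linarith
  have hSD : ∀ v ∈ S, v ∉ D := fun v hv hv' => Finset.disjoint_left.1 hDS hv' hv
  have hRmem : ∀ v ∈ R, v ∉ D ∧ v ∉ S := by
    intro v hv
    simpa [hR] using hv
  have h1 : ∑ v ∈ D, (e S v + e R v) ≤
      ∑ v ∈ D, degWeight S.card (v ∈ D) (v ∈ S) (G.degree v) := by
    refine Finset.sum_le_sum fun v hv => ?_
    rw [degWeight, if_pos hv, hdeg]
    linarith [he0 D v]
  have h2 : ∑ v ∈ S, (1 - e D v - (S.card - 1) - e R v) ≤
      ∑ v ∈ S, degWeight S.card (v ∈ D) (v ∈ S) (G.degree v) := by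
    refine Finset.sum_le_sum fun v hv => ?_
    rw [degWeight, if_neg (hSD v hv), if_pos hv, hdeg]
    linarith [heSS v hv]
  have h3 : ∑ v ∈ R, e S v ≤
      ∑ v ∈ R, degWeight S.card (v ∈ D) (v ∈ S) (G.degree v) := by
    refine Finset.sum_le_sum fun v hv => ?_
    rw [degWeight, if_neg (hRmem v hv).1, if_neg (hRmem v hv).2, hdeg]
    refine le_min (heS v) ?_
    linarith [hdom v (hRmem v hv).1, he0 R v]
  have h4 : (R.card : ℤ) ≤ ∑ v ∈ R, e D v := by
    have := Finset.card_nsmul_le_sum R (e D) 1 fun v hv => hdom v (hRmem v hv).1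
    simpa using this
  rw [hsplit, hcard]
  simp only [Finset.sum_add_distrib, Finset.sum_sub_distrib, Finset.sum_const, nsmul_eq_mul]
    at h1 h2
  linarith [hcomm D S, hcomm D R, hcomm R S]

/-- Two finite sets of the same size are exchanged by an involution that only moves points of their
symmetric difference. -/
theorem exists_swap_involution {V : Type*} [DecidableEq V] (A B : Finset V)
    (hAB : A.card = B.card) :
    ∃ π : V → V, Function.Involutive π ∧ (∀ i, π i ∈ B ↔ i ∈ A) ∧
      ∀ i, π i ≠ i → (i ∈ A ↔ π i ∉ A) := by
  have hc : (A \ B).card = (B \ A).card := Finset.card_sdiff_comm hAB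
  obtain ⟨e⟩ : Nonempty ((A \ B : Finset V) ≃ (B \ A : Finset V)) :=
    ⟨Finset.equivOfCardEq hc⟩
  obtain ⟨π, hπ⟩ : ∃ π : V → V, π = fun x =>
    if h : x ∈ A \ B then (e ⟨x, h⟩ : V) else
      if h : x ∈ B \ A then (e.symm ⟨x, h⟩ : V) else x := ⟨_, rfl⟩
  have hπ1 : ∀ x (h : x ∈ A \ B), π x = e ⟨x, h⟩ := fun x h => by
    simp only [hπ, dif_pos h]
  have hπ2 : ∀ x (h : x ∈ B \ A), π x = e.symm ⟨x, h⟩ := fun x h => by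
    have h' : x ∉ A \ B := by
      simp only [Finset.mem_sdiff] at h ⊢
      tauto
    simp only [hπ, dif_neg h', dif_pos h]
  have hπ3 : ∀ x, x ∉ A \ B → x ∉ B \ A → π x = x := fun x h h' => by
    simp only [hπ, dif_neg h, dif_neg h']
  have hm1 : ∀ x, x ∈ A \ B → π x ∈ B \ A := fun x h => by
    rw [hπ1 x h]
    exact (e _).2
  have hm2 : ∀ x, x ∈ B \ A → π x ∈ A \ B := fun x h => by
    rw [hπ2 x h]
    exact (e.symm _).2
  clear hπ
  refine ⟨π, fun x => ?_, fun x => ?_, fun x => ?_⟩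
  · by_cases h : x ∈ A \ B
    · rw [hπ2 _ (hm1 x h)]
      simp [hπ1 x h]
    · by_cases h' : x ∈ B \ A
      · rw [hπ1 _ (hm2 x h')]
        simp [hπ2 x h']
      · rw [hπ3 x h h', hπ3 x h h']
  all_goals
    have a1 := hm1 x
    have a2 := hm2 x
    have a3 := hπ3 x
    simp only [Finset.mem_sdiff] at a1 a2 a3
    grind

/-- Interchanging two vertices, exactly one of them a dominator, so that the dominator slot gets the
larger degree does not decrease the total weight. -/
theorem sum_weight_involution_le {V : Type*} [Fintype V] (k : ℤ) (p q : V → Prop)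
    [DecidablePred p] [DecidablePred q] (d : V → ℤ) (π : V → V) (hπ : Function.Involutive π)
    (hp : ∀ i, π i ≠ i → (p i ↔ ¬ p (π i))) (hd : ∀ i j, p i → ¬ p j → d j ≤ d i) :
    ∑ i, degWeight k (p i) (q i) (d (π i)) ≤ ∑ i, degWeight k (p i) (q i) (d i) := by
  have r1 : ∑ i, degWeight k (p (π i)) (q (π i)) (d i) =
      ∑ i, degWeight k (p i) (q i) (d (π i)) :=
    Fintype.sum_equiv (hπ.toPerm π) _ _ fun i => by simp [hπ i]
  have r2 : ∑ i, degWeight k (p (π i)) (q (π i)) (d (π i)) =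
      ∑ i, degWeight k (p i) (q i) (d i) :=
    Fintype.sum_equiv (hπ.toPerm π) _ _ fun i => rfl
  -- after symmetrising over `π`, the comparison holds term by term
  have key : ∑ i, (degWeight k (p i) (q i) (d (π i)) + degWeight k (p (π i)) (q (π i)) (d i)) ≤
      ∑ i, (degWeight k (p i) (q i) (d i) + degWeight k (p (π i)) (q (π i)) (d (π i))) := by
    refine Finset.sum_le_sum fun i _ => ?_
    by_cases hi : π i = i
    · simp only [hi, le_refl]
    · have h1 := hp i hi
      have h2 := hd i (π i)
      have h3 := hd (π i) i
      unfold degWeight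
      by_cases hpi : p i
      · have h4 := h1.1 hpi
        have h5 := h2 hpi h4
        simp only [if_pos hpi, if_neg h4]
        split_ifs <;> omega
      · have h4 : p (π i) := by tauto
        have h5 := h3 h4 hpi
        simp only [if_pos h4, if_neg hpi]
        split_ifs <;> omega
  simp only [Finset.sum_add_distrib] at key
  linarith

/-- The total weight of the sorted classes, written with the 1-based interval sums. -/
theorem sum_weight_sorted (n γ k : ℕ) (h : γ + k ≤ n) (d : ℕ → ℕ) :
    ∑ i : Fin n, degWeight k (i.val < γ) (γ ≤ i.val ∧ i.val < γ + k) (d (i.val + 1)) =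
      ∑ i ∈ Finset.Icc 1 γ, (d i : ℤ) - ∑ i ∈ Finset.Icc (γ + 1) (γ + k), ((d i : ℤ) - 1) +
        ∑ i ∈ Finset.Icc (γ + k + 1) n, min (k : ℤ) ((d i : ℤ) - 1) := by
  have hshift : ∀ (f : ℕ → ℤ) (a b : ℕ),
      ∑ i ∈ Finset.Icc (a + 1) b, f i = ∑ i ∈ Finset.Ico a b, f (i + 1) := by
    intro f a b
    rw [Finset.sum_Ico_add' f a b 1]
    rfl
  rw [Fin.sum_univ_eq_sum_range
    (fun i => degWeight (k : ℤ) (i < γ) (γ ≤ i ∧ i < γ + k) (d (i + 1) : ℤ)) n,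
    Finset.range_eq_Ico, ← Finset.sum_Ico_consecutive _ (Nat.zero_le (γ + k)) h,
    ← Finset.sum_Ico_consecutive _ (Nat.zero_le γ) (Nat.le_add_right γ k),
    hshift _ 0 γ, hshift _ γ, hshift _ (γ + k), sub_eq_add_neg, ← Finset.sum_neg_distrib]
  congr 1
  · congr 1
    · refine Finset.sum_congr rfl fun i hi => ?_
      rw [Finset.mem_Ico] at hi
      rw [degWeight, if_pos hi.2]
    · refine Finset.sum_congr rfl fun i hi => ?_
      rw [Finset.mem_Ico] at hi
      rw [degWeight, if_neg (by omega), if_pos hi]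
      ring
  · refine Finset.sum_congr rfl fun i hi => ?_
    rw [Finset.mem_Ico] at hi
    rw [degWeight, if_neg (by omega), if_neg (by omega)]

/-- If a non-increasing positive sequence `d` (1-based) has a realization
(a simple graph on `Fin n`, vertex `i` having degree `d (i+1)`) with a dominating
set of size `γ`, then the first system of Erdős–Gallai type inequalities holds:
for every `k ∈ {0, …, n-γ}`,
`Σ_{i=γ+1}^{γ+k} (d_i − 1) ≤ k(k−1) − (n−γ) + Σ_{i=1}^{γ} d_i + Σ_{i=γ+k+1}^{n} min{k, d_i − 1}`. -/
theorem stmt_4 (n γ : ℕ) (hγ1 : 1 ≤ γ) (hγn : γ ≤ n) (d : ℕ → ℕ)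
    (hpos : ∀ i, 1 ≤ i → i ≤ n → 0 < d i)
    (hmono : ∀ i j, 1 ≤ i → i ≤ j → j ≤ n → d j ≤ d i)
    (h : ∃ (G : SimpleGraph (Fin n)) (_ : DecidableRel G.Adj),
      (∀ i : Fin n, G.degree i = d (i.val + 1)) ∧
      ∃ D : Finset (Fin n), D.card = γ ∧ ∀ v ∉ D, ∃ u ∈ D, G.Adj u v) :
    ∀ k : ℕ, k ≤ n - γ →
      ∑ i ∈ Finset.Icc (γ + 1) (γ + k), ((d i : ℤ) - 1) ≤
        (k : ℤ) * ((k : ℤ) - 1) - ((n : ℤ) - (γ : ℤ)) +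
        ∑ i ∈ Finset.Icc 1 γ, (d i : ℤ) +
        ∑ i ∈ Finset.Icc (γ + k + 1) n, min (k : ℤ) ((d i : ℤ) - 1) := by
  intro k hk
  obtain ⟨G, _, hdeg, D, hDcard, hdom⟩ := h
  have hdegZ : ∀ i, (G.degree i : ℤ) = (d (i.val + 1) : ℤ) := fun i => by
    rw [← hdeg i]
  have hcount : ∀ a b : ℕ, b ≤ n →
      (Finset.univ.filter fun i : Fin n => a ≤ i.val ∧ i.val < b).card = b - a := by
    intro a b hb
    rw [← Nat.card_Ico, ← Finset.card_map Fin.valEmbedding]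
    congr 1
    ext x
    simp only [Finset.mem_map, Finset.mem_filter, Finset.mem_univ, true_and, Finset.mem_Ico,
      Fin.valEmbedding_apply]
    exact ⟨by rintro ⟨i, hi, rfl⟩; exact hi, fun hx => ⟨⟨x, by omega⟩, hx, rfl⟩⟩
  set D₀ : Finset (Fin n) := Finset.univ.filter fun i => 0 ≤ i.val ∧ i.val < γ with hD₀
  set S₀ : Finset (Fin n) := Finset.univ.filter fun i => γ ≤ i.val ∧ i.val < γ + k with hS₀
  have memD₀ : ∀ i, i ∈ D₀ ↔ i.val < γ := by simp [hD₀]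
  have memS₀ : ∀ i, i ∈ S₀ ↔ γ ≤ i.val ∧ i.val < γ + k := by simp [hS₀]
  obtain ⟨π, hinv, hπD, hπne⟩ :=
    exists_swap_involution D₀ D (by rw [hDcard, hD₀, hcount 0 γ hγn, Nat.sub_zero])
  set S : Finset (Fin n) := S₀.map (hinv.toPerm π).toEmbedding with hS
  have hScard : S.card = k := by
    rw [hS, Finset.card_map, hS₀, hcount γ (γ + k) (by omega)]
    omega
  have hπS : ∀ i, π i ∈ S ↔ i ∈ S₀ := fun i =>
    Finset.mem_map' (hinv.toPerm π).toEmbedding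
  have hdisj : Disjoint D S := by
    refine Finset.disjoint_left.2 fun i hi hi' => ?_
    rw [← hinv i] at hi hi'
    rw [hπD, memD₀] at hi
    rw [hπS, memS₀] at hi'
    omega
  have h1 := domination_count G D S hdisj hdom
  rw [hScard, hDcard, Fintype.card_fin] at h1
  have h2 : ∑ v, degWeight k (v ∈ D) (v ∈ S) (G.degree v) =
      ∑ i : Fin n, degWeight k (i.val < γ) (γ ≤ i.val ∧ i.val < γ + k)
        (d ((π i).val + 1)) := by
    refine (Fintype.sum_equiv (hinv.toPerm π) _ _ fun i => ?_).symm
    rw [Function.Involutive.coe_toPerm, hdegZ]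
    simp only [degWeight, hπD, hπS, memD₀, memS₀]
  have h3 := sum_weight_involution_le (k : ℤ) (fun i : Fin n => i.val < γ)
    (fun i => γ ≤ i.val ∧ i.val < γ + k) (fun i => (d (i.val + 1) : ℤ)) π hinv
    (fun i hi => by simpa only [memD₀] using hπne i hi)
    (fun i j hi hj => by
      have := hmono (i.val + 1) (j.val + 1) (by omega) (by omega) (by omega)
      exact_mod_cast this)
  rw [sum_weight_sorted n γ k (by omega) d] at h3
  linarith
end

section
/- Let d = (d_1, …, d_n) be a non-increasing sequence of positive integers and let γ ∈ {1, …, n}. If there exists a simple graph on vertex set {1, …, n} realizing d that has a dominating set of size γ, then for every k ∈ {0, 1, …, min{d_1, n−γ}}: Σ_{i=γ+1}^{γ+k} d_i ≤ k(k−1) + Σ_{i=1}^{γ} min{k, d_i} + Σ_{i=γ+k+1}^{n} min{k, d_i − 1}. -/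
/-!
Call a vertex low if its degree is at most `k`, and high otherwise.

If `d (γ + 1) ≤ k`, the inequality is elementary: the left side is at most `k * d (γ + 1)`, while
`k * (k - 1)` and the term of index `1` already contribute `(k - 1) * d (γ + 1) + d (γ + 1)`.

Otherwise the `γ + t` first vertices are high, where `1 ≤ t ≤ k`, and those of index in
`(γ + t, γ + k]` are low. The dominating set `D` need not consist of the first `γ` vertices, nor of
high ones. Replace each low vertex of `D` by one of its neighbours; this gives a set `R` of at most
`γ` vertices such that, for every set `S` of high vertices disjoint from `R`, each low vertex has a
neighbour outside `S` (`exists_low_escape`). As `|R| ≤ γ`, such an `S` with `t` elements exists among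
the first `γ + t` vertices. Its degree sum is at least `∑ i ∈ (γ, γ + t], d i`
(`sum_last_le_sum_subset`), and equals the sum over all vertices `v` of the number of neighbours of
`v` in `S` (`sum_degree_eq_sum_card_inter`). That number is at most `t`, at most `t - 1` for
`v ∈ S`, and at most `d v - 1` for `v` low. With `d i ≤ k` on `(γ + t, γ + k]`, the left side is
at most `k² + t (γ - 1)` plus the last sum of the right side, and `t (γ - 1) ≤ k (γ - 1)`.
-/

/-- Double counting of the edges between `S` and the whole vertex set. -/
lemma sum_degree_eq_sum_card_inter {V : Type*} [Fintype V] [DecidableEq V] (G : SimpleGraph V)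
    [DecidableRel G.Adj] (S : Finset V) :
    ∑ v ∈ S, G.degree v = ∑ v, (G.neighborFinset v ∩ S).card := by
  have h := Finset.sum_card_bipartiteAbove_eq_sum_card_bipartiteBelow (s := S)
    (t := (Finset.univ : Finset V)) G.Adj
  convert h using 2 with v _ v _
  · rw [← G.card_neighborFinset_eq_degree]
    congr 1
    ext u
    simp [Finset.bipartiteAbove]
  · congr 1
    ext u
    simp [Finset.bipartiteBelow, G.adj_comm, and_comm]

/-- A dominating set `D` can be modified, without growing, into a set `R` such that every vertex
satisfying `L` has a neighbour outside any set which avoids both `R` and `L`. The elements of `D`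
satisfying `L` are replaced by one of their neighbours. -/
lemma exists_low_escape {V : Type*} [DecidableEq V] (G : SimpleGraph V) (L : V → Prop)
    (D : Finset V) (hD : ∀ v ∉ D, ∃ u ∈ D, G.Adj u v) (hnb : ∀ v, ∃ u, G.Adj v u) :
    ∃ R : Finset V, R.card ≤ D.card ∧ ∀ S : Finset V, (∀ v ∈ S, ¬ L v) → (∀ v ∈ S, v ∉ R) →
      ∀ v, L v → ∃ u, G.Adj v u ∧ u ∉ S := by
  classical
  choose p hp using hnb
  refine ⟨D.image (fun v => if L v then p v else v), Finset.card_image_le, ?_⟩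
  intro S hS hSR v hv
  by_cases hvD : v ∈ D
  · refine ⟨p v, hp v, fun h => hSR _ h ?_⟩
    exact Finset.mem_image.2 ⟨v, hvD, by simp [hv]⟩
  · obtain ⟨u, hu, huv⟩ := hD v hvD
    refine ⟨u, huv.symm, fun h => hSR _ h ?_⟩
    exact Finset.mem_image.2 ⟨u, hu, by simp [hS u h]⟩

/-- Among the `t`-element subsets of `[1, γ + t]`, the final segment minimizes the sum of a
non-increasing sequence. -/
lemma sum_last_le_sum_subset (γ t : ℕ) (hγ : 1 ≤ γ) (d : ℕ → ℕ)
    (hmono : ∀ i j, 1 ≤ i → i ≤ j → j ≤ γ + t → d j ≤ d i)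
    (T : Finset ℕ) (hT : T ⊆ Finset.Icc 1 (γ + t)) (hc : T.card = t) :
    ∑ i ∈ Finset.Icc (γ + 1) (γ + t), d i ≤ ∑ i ∈ T, d i := by
  set A := Finset.Icc (γ + 1) (γ + t) with hA
  have hAc : A.card = T.card := by simp [hA, hc]
  have hcard : (A \ T).card = (T \ A).card := Finset.card_sdiff_comm hAc
  rw [← Finset.sum_inter_add_sum_sdiff A T, ← Finset.sum_inter_add_sum_sdiff T A,
    Finset.inter_comm T A]
  have h1 : ∑ i ∈ A \ T, d i ≤ (A \ T).card • d γ := by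
    apply Finset.sum_le_card_nsmul
    intro i hi
    simp only [hA, Finset.mem_sdiff, Finset.mem_Icc] at hi
    exact hmono _ _ hγ (by omega) (by omega)
  have h2 : (T \ A).card • d γ ≤ ∑ i ∈ T \ A, d i := by
    apply Finset.card_nsmul_le_sum
    intro i hi
    obtain ⟨hi1, hi2⟩ := Finset.mem_sdiff.1 hi
    have := Finset.mem_Icc.1 (hT hi1)
    simp only [hA, Finset.mem_Icc] at hi2
    exact hmono _ _ (by omega) (by omega) (by omega)
  rw [hcard] at h1
  omega

lemma sum_fin_eq_sum_Icc (n : ℕ) (f : ℕ → ℤ) :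
    ∑ v : Fin n, f (v.val + 1) = ∑ i ∈ Finset.Icc 1 n, f i := by
  rw [Fin.sum_univ_eq_sum_range (fun i => f (i + 1)) n, Finset.range_eq_Ico,
    Finset.sum_Ico_add' f 0 n 1]
  rfl

lemma sum_Icc_split (a b c : ℕ) (h1 : a ≤ b) (h2 : b ≤ c) (f : ℕ → ℤ) :
    ∑ i ∈ Finset.Icc (a + 1) c, f i =
      ∑ i ∈ Finset.Icc (a + 1) b, f i + ∑ i ∈ Finset.Icc (b + 1) c, f i := by
  have := Finset.sum_Ico_consecutive f (m := a + 1) (n := b + 1) (k := c + 1)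
    (by omega) (by omega)
  exact this.symm

/-- The edge count for a realization: the part of the degree sum carried by the high vertices
of index in `(γ, γ + t]`. -/
lemma sum_high_le (n γ k t : ℕ) (hγ1 : 1 ≤ γ) (d : ℕ → ℕ)
    (hpos : ∀ i, 1 ≤ i → i ≤ n → 0 < d i)
    (hmono : ∀ i j, 1 ≤ i → i ≤ j → j ≤ n → d j ≤ d i)
    (G : SimpleGraph (Fin n)) [DecidableRel G.Adj]
    (hdeg : ∀ i : Fin n, G.degree i = d (i.val + 1))
    (D : Finset (Fin n)) (hDc : D.card = γ) (hD : ∀ v ∉ D, ∃ u ∈ D, G.Adj u v)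
    (htk : t ≤ k) (hkn : γ + k ≤ n) (hhigh : k < d (γ + t)) :
    ∑ i ∈ Finset.Icc (γ + 1) (γ + t), (d i : ℤ) ≤
      ((γ : ℤ) + k - 1) * t + ∑ i ∈ Finset.Icc (γ + k + 1) n, min (k : ℤ) ((d i : ℤ) - 1) := by
  have hnb : ∀ v, ∃ u, G.Adj v u := fun v => by
    rw [← G.degree_pos_iff_exists_adj, hdeg]
    exact hpos _ (by omega) (by omega)
  obtain ⟨R, hRc, hR⟩ := exists_low_escape G (fun v => d (v.val + 1) ≤ k) D hD hnb
  let M : Finset (Fin n) := Finset.univ.filter (fun v => v.val < γ + t)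
  have hMc : M.card = γ + t := by
    have := Fin.card_filter_val_lt (n := n) (m := γ + t)
    simp only [M]
    rw [this]
    omega
  have hMR : t ≤ (M \ R).card := by
    have := Finset.le_card_sdiff R M
    omega
  obtain ⟨S, hSM, hSc⟩ := Finset.exists_subset_card_eq hMR
  have hSlt : ∀ v ∈ S, v.val < γ + t := fun v hv => by
    have := (Finset.mem_sdiff.1 (hSM hv)).1
    simpa [M] using this
  have hesc := hR S
    (fun v hv hlow => by
      have h1 := hSlt v hv
      have := hmono (v.val + 1) (γ + t) (by omega) (by omega) (by omega)
      omega)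
    (fun v hv => (Finset.mem_sdiff.1 (hSM hv)).2)
  have hsum : ∑ i ∈ Finset.Icc (γ + 1) (γ + t), d i ≤ ∑ v ∈ S, d (v.val + 1) := by
    have := sum_last_le_sum_subset γ t hγ1 d
      (fun i j h1 h2 h3 => hmono i j h1 h2 (by omega))
      (S.map ⟨fun v => v.val + 1, fun a b h => by
        apply Fin.ext; simpa using h⟩)
      (by
        intro i hi
        obtain ⟨v, hv, rfl⟩ := Finset.mem_map.1 hi
        have := hSlt v hv
        change v.val + 1 ∈ _
        simp only [Finset.mem_Icc]
        omega)
      (by simpa using hSc)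
    rwa [Finset.sum_map] at this
  have hdc := sum_degree_eq_sum_card_inter G S
  simp only [hdeg] at hdc
  rw [hdc] at hsum
  let b : ℕ → ℤ := fun i => if i ≤ γ + k then (t : ℤ) else min (k : ℤ) ((d i : ℤ) - 1)
  -- The indicator of `S` accounts for the absence of loops.
  have hb : ∀ v : Fin n, ((G.neighborFinset v ∩ S).card : ℤ) ≤
      b (v.val + 1) - if v ∈ S then 1 else 0 := by
    intro v
    have hle : (G.neighborFinset v ∩ S).card ≤ t :=
      hSc ▸ Finset.card_le_card Finset.inter_subset_right
    by_cases hvS : v ∈ S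
    · have h1 := hSlt v hvS
      have h2 : (G.neighborFinset v ∩ S).card < S.card := by
        apply Finset.card_lt_card
        refine Finset.ssubset_iff_subset_ne.2 ⟨Finset.inter_subset_right, fun h => ?_⟩
        rw [← h] at hvS
        simp at hvS
      simp only [b, hvS, if_true]
      rw [if_pos (by omega)]
      omega
    · simp only [b, hvS, if_false]
      split_ifs with h1
      · omega
      · by_cases hlow : d (v.val + 1) ≤ k
        · obtain ⟨u, hu, huS⟩ := hesc v hlow
          have h2 : (G.neighborFinset v ∩ S).card < (G.neighborFinset v).card := by
            apply Finset.card_lt_card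
            refine Finset.ssubset_iff_subset_ne.2 ⟨Finset.inter_subset_left, fun h => ?_⟩
            have : u ∈ G.neighborFinset v := by simpa using hu
            rw [← h] at this
            exact huS (Finset.mem_inter.1 this).2
          rw [G.card_neighborFinset_eq_degree, hdeg] at h2
          omega
        · omega
  have htot := Finset.sum_le_sum (fun v (_ : v ∈ (Finset.univ : Finset (Fin n))) => hb v)
  rw [Finset.sum_sub_distrib, sum_fin_eq_sum_Icc, ← Nat.cast_sum] at htot
  have hind : ∑ v : Fin n, (if v ∈ S then (1 : ℤ) else 0) = t := by simp [hSc]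
  have hbs : ∑ i ∈ Finset.Icc 1 n, b i =
      ((γ : ℤ) + k) * t + ∑ i ∈ Finset.Icc (γ + k + 1) n, min (k : ℤ) ((d i : ℤ) - 1) := by
    have := sum_Icc_split 0 (γ + k) n (by omega) hkn b
    rw [zero_add] at this
    rw [this]
    congr 1
    · rw [Finset.sum_congr rfl (g := fun _ => (t : ℤ))
        (fun i hi => if_pos (Finset.mem_Icc.1 hi).2)]
      simp
    · exact Finset.sum_congr rfl
        (fun i hi => if_neg (by have := (Finset.mem_Icc.1 hi).1; omega))
  rw [hind, hbs] at htot
  have hsum' : ∑ i ∈ Finset.Icc (γ + 1) (γ + t), (d i : ℤ) ≤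
      ((∑ v, (G.neighborFinset v ∩ S).card : ℕ) : ℤ) := by exact_mod_cast hsum
  linarith


/-- If a non-increasing positive sequence `d` (1-based) has a realization
(a simple graph on `Fin n`, vertex `i` having degree `d (i+1)`) with a dominating
set of size `γ`, then the third system of Erdős–Gallai type inequalities holds:
for every `k ∈ {0, …, min{d_1, n−γ}}`,
`Σ_{i=γ+1}^{γ+k} d_i ≤ k(k−1) + Σ_{i=1}^{γ} min{k, d_i} + Σ_{i=γ+k+1}^{n} min{k, d_i − 1}`. -/
theorem stmt_5 (n γ : ℕ) (hγ1 : 1 ≤ γ) (hγn : γ ≤ n) (d : ℕ → ℕ)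
    (hpos : ∀ i, 1 ≤ i → i ≤ n → 0 < d i)
    (hmono : ∀ i j, 1 ≤ i → i ≤ j → j ≤ n → d j ≤ d i)
    (h : ∃ (G : SimpleGraph (Fin n)) (_ : DecidableRel G.Adj),
      (∀ i : Fin n, G.degree i = d (i.val + 1)) ∧
      ∃ D : Finset (Fin n), D.card = γ ∧ ∀ v ∉ D, ∃ u ∈ D, G.Adj u v) :
    ∀ k : ℕ, k ≤ min (d 1) (n - γ) →
      ∑ i ∈ Finset.Icc (γ + 1) (γ + k), (d i : ℤ) ≤
        (k : ℤ) * ((k : ℤ) - 1) +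
        ∑ i ∈ Finset.Icc 1 γ, min (k : ℤ) (d i : ℤ) +
        ∑ i ∈ Finset.Icc (γ + k + 1) n, min (k : ℤ) ((d i : ℤ) - 1) := by
  obtain ⟨G, _, hdeg, D, hDc, hD⟩ := h
  intro k hk
  have hkn : γ + k ≤ n := by omega
  have htail : 0 ≤ ∑ i ∈ Finset.Icc (γ + k + 1) n, min (k : ℤ) ((d i : ℤ) - 1) := by
    apply Finset.sum_nonneg
    intro i hi
    have := Finset.mem_Icc.1 hi
    have := hpos i (by omega) (by omega)
    omega
  rcases Nat.eq_zero_or_pos k with rfl | hk0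
  · have h1 : 0 ≤ ∑ i ∈ Finset.Icc 1 γ, min ((0 : ℕ) : ℤ) (d i : ℤ) :=
      Finset.sum_nonneg (fun i _ => by omega)
    simp only [add_zero, Finset.Icc_eq_empty (show ¬ γ + 1 ≤ γ by omega), Finset.sum_empty]
    simp only [add_zero] at htail
    push_cast at *
    linarith
  by_cases hlow : d (γ + 1) ≤ k
  · have h1 : ∑ i ∈ Finset.Icc (γ + 1) (γ + k), (d i : ℤ) ≤
        (Finset.Icc (γ + 1) (γ + k)).card • (d (γ + 1) : ℤ) := by
      apply Finset.sum_le_card_nsmul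
      intro i hi
      have := Finset.mem_Icc.1 hi
      exact_mod_cast hmono (γ + 1) i (by omega) (by omega) (by omega)
    have h2 : min (k : ℤ) (d 1 : ℤ) ≤ ∑ i ∈ Finset.Icc 1 γ, min (k : ℤ) (d i : ℤ) :=
      Finset.single_le_sum (f := fun i => min (k : ℤ) (d i : ℤ)) (fun i _ => by omega)
        (Finset.mem_Icc.2 ⟨le_refl 1, hγ1⟩)
    have h3 := hmono 1 (γ + 1) (by omega) (by omega) (by omega)
    have h4 : (d (γ + 1) : ℤ) ≤ min (k : ℤ) (d 1 : ℤ) := by omega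
    have h5 : ((k : ℤ) - 1) * d (γ + 1) ≤ ((k : ℤ) - 1) * k :=
      mul_le_mul_of_nonneg_left (by omega) (by omega)
    simp only [Nat.card_Icc, nsmul_eq_mul] at h1
    rw [show γ + k + 1 - (γ + 1) = k by omega] at h1
    linarith
  · obtain ⟨t, htk, hthigh, htlow⟩ : ∃ t ≤ k, k < d (γ + t) ∧
        ∀ i, γ + t + 1 ≤ i → i ≤ γ + k → d i ≤ k := by
      refine ⟨Nat.findGreatest (fun t => k < d (γ + t)) k, Nat.findGreatest_le k,
        Nat.findGreatest_spec (P := fun t => k < d (γ + t)) hk0 (not_le.1 hlow), ?_⟩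
      intro i h1 h2
      have := Nat.findGreatest_is_greatest (P := fun t => k < d (γ + t)) (n := k) (k := i - γ)
        (by omega) (by omega)
      rw [show γ + (i - γ) = i by omega] at this
      omega
    have h1 := sum_high_le n γ k t hγ1 d hpos hmono G hdeg D hDc hD htk hkn hthigh
    have h2 : ∑ i ∈ Finset.Icc (γ + t + 1) (γ + k), (d i : ℤ) ≤
        (Finset.Icc (γ + t + 1) (γ + k)).card • (k : ℤ) := by
      apply Finset.sum_le_card_nsmul
      intro i hi
      have := Finset.mem_Icc.1 hi
      exact_mod_cast htlow i this.1 this.2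
    have h3 : ∑ i ∈ Finset.Icc 1 γ, min (k : ℤ) (d i : ℤ) = γ * k := by
      rw [Finset.sum_congr rfl (g := fun _ => (k : ℤ)) (fun i hi => by
        have := Finset.mem_Icc.1 hi
        have := hmono i (γ + t) (by omega) (by omega) (by omega)
        omega)]
      simp
    simp only [Nat.card_Icc, nsmul_eq_mul] at h2
    rw [show γ + k + 1 - (γ + t + 1) = k - t by omega, Nat.cast_sub htk] at h2
    rw [sum_Icc_split γ (γ + t) (γ + k) (by omega) (by omega), h3]
    have h4 : (t : ℤ) * ((γ : ℤ) - 1) ≤ k * ((γ : ℤ) - 1) :=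
      mul_le_mul_of_nonneg_right (by omega) (by omega)
    nlinarith
end

section
/- Let a_1 ≥ a_2 ≥ … ≥ a_n be a non-increasing sequence of non-negative integers, let m ≥ 0, and let f : {0, 1, …, m} → ℝ be a non-decreasing function. Then the following two systems of constraints are equivalent: (A) for every subset I ⊆ {1, …, n} with |I| ≤ m: Σ_{i ∈ I} a_i ≤ f(|I|) + Σ_{i ∈ I} min{|I| − 1, a_i} + Σ_{i ∈ {1,…,n} \ I} min{|I|, a_i}; (B) for every k ∈ {0, 1, …, min{m, n}}: Σ_{i=1}^{k} a_i ≤ f(k) + k(k−1) + Σ_{i=k+1}^{n} min{k, a_i}. -/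
/-!
For a set `J` of size `j`, consider the relaxation of (A) in which `min (j - 1) (a i)` is replaced
by `j - 1`, that is `∑_{i ∈ J} a i ≤ f j + j (j - 1) + ∑_{i ∉ J} min j (a i)`. Moving
`∑_{i ∈ J} min j (a i)` to the left turns this into an upper bound on a sum over `J` of an
increasing function of `a i`, so among sets of size `j` the prefix `{1, …, j}` is the most
restrictive. Hence (B) is equivalent to the relaxed inequality for all sets (`relaxed_of_prefix`).

To recover (A) for `I` with `|I| = k`, apply the relaxed inequality to
`J = {i ∈ I | k - 1 ≤ a i}`, of size `j ≤ k`. The indices of `I \ J` contribute equally to both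
sides of (A), and passing from `J` to `I` costs at most
`∑_{i ∈ I \ J} min j (a i) ≤ j (k - j)`, which is what replacing `j - 1` by `k - 1` on `J` gains;
monotonicity of `f` does the rest.
-/

/-- Among the `j`-element subsets of `{1, …, n}`, the prefix `{1, …, j}` maximizes the sum of a
non-increasing function. -/
lemma sum_le_sum_prefix (n : ℕ) (g : ℕ → ℝ)
    (hg : ∀ i j, 1 ≤ i → i ≤ j → j ≤ n → g j ≤ g i)
    (J : Finset ℕ) (hJ : J ⊆ Finset.Icc 1 n) :
    ∑ i ∈ J, g i ≤ ∑ i ∈ Finset.Icc 1 J.card, g i := by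
  have hjn : J.card ≤ n := by simpa using Finset.card_le_card hJ
  rcases Nat.eq_zero_or_pos J.card with h0 | hpos
  · simp [Finset.card_eq_zero.mp h0]
  set P := Finset.Icc 1 J.card with hP
  have hcard : (J \ P).card = (P \ J).card :=
    Finset.card_sdiff_comm (by simp [hP])
  -- Both differences are compared with the value of `g` at the last index of the prefix.
  have h1 : ∑ i ∈ J \ P, g i ≤ (J \ P).card • g J.card := by
    refine Finset.sum_le_card_nsmul _ _ _ fun i hi => ?_
    obtain ⟨hiJ, hiP⟩ := Finset.mem_sdiff.mp hi
    have := Finset.mem_Icc.mp (hJ hiJ)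
    have hiP' : ¬ (1 ≤ i ∧ i ≤ J.card) := fun h => hiP (Finset.mem_Icc.mpr h)
    exact hg _ _ hpos (by omega) this.2
  have h2 : (P \ J).card • g J.card ≤ ∑ i ∈ P \ J, g i := by
    refine Finset.card_nsmul_le_sum _ _ _ fun i hi => ?_
    have := Finset.mem_Icc.mp (Finset.mem_sdiff.mp hi).1
    exact hg _ _ this.1 this.2 hjn
  rw [← Finset.sum_inter_add_sum_sdiff J P, ← Finset.sum_inter_add_sum_sdiff P J,
    Finset.inter_comm P J]
  rw [hcard] at h1
  linarith

lemma Icc_sdiff_prefix (n k : ℕ) :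
    Finset.Icc 1 n \ Finset.Icc 1 k = Finset.Icc (k + 1) n := by
  ext i
  simp only [Finset.mem_sdiff, Finset.mem_Icc]
  omega

/-- The constraint of (B) for the prefix `{1, …, |J|}` implies the same constraint for `J`. -/
lemma relaxed_of_prefix (n : ℕ) (a : ℕ → ℕ)
    (hmono : ∀ i j, 1 ≤ i → i ≤ j → j ≤ n → a j ≤ a i) (c : ℝ)
    (J : Finset ℕ) (hJ : J ⊆ Finset.Icc 1 n)
    (hB : ∑ i ∈ Finset.Icc 1 J.card, (a i : ℝ) ≤
      c + ∑ i ∈ Finset.Icc (J.card + 1) n, min (J.card : ℝ) (a i : ℝ)) :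
    ∑ i ∈ J, (a i : ℝ) ≤ c + ∑ i ∈ Finset.Icc 1 n \ J, min (J.card : ℝ) (a i : ℝ) := by
  have hjn : J.card ≤ n := by simpa using Finset.card_le_card hJ
  have h := sum_le_sum_prefix n (fun i => (a i : ℝ) + min (J.card : ℝ) (a i : ℝ))
    (fun i j hi hij hj => by
      have : (a j : ℝ) ≤ a i := by exact_mod_cast hmono i j hi hij hj
      gcongr) J hJ
  rw [Finset.sum_add_distrib, Finset.sum_add_distrib] at h
  have e1 := Finset.sum_sdiff (f := fun i => min (J.card : ℝ) (a i : ℝ)) hJ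
  have e2 := Finset.sum_sdiff (f := fun i => min (J.card : ℝ) (a i : ℝ))
    (Finset.Icc_subset_Icc_right hjn : Finset.Icc 1 J.card ⊆ Finset.Icc 1 n)
  rw [Icc_sdiff_prefix] at e2
  linarith

/-- **Equivalence of two systems of constraints.**
Let `a 1 ≥ a 2 ≥ … ≥ a n` be a non-increasing sequence of non-negative integers and
`f : {0, …, m} → ℝ` be non-decreasing. Then the subset system (A) is equivalent to
the prefix system (B):
(A) for every `I ⊆ {1, …, n}` with `|I| ≤ m`:
    `Σ_{i∈I} a_i ≤ f(|I|) + Σ_{i∈I} min{|I|−1, a_i} + Σ_{i∉I} min{|I|, a_i}`;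
(B) for every `k ∈ {0, …, min{m, n}}`:
    `Σ_{i=1}^{k} a_i ≤ f(k) + k(k−1) + Σ_{i=k+1}^{n} min{k, a_i}`. -/
theorem stmt_8 (n m : ℕ) (a : ℕ → ℕ)
    (hmono : ∀ i j, 1 ≤ i → i ≤ j → j ≤ n → a j ≤ a i)
    (f : ℕ → ℝ) (hf : ∀ j k, j ≤ k → k ≤ m → f j ≤ f k) :
    (∀ I : Finset ℕ, I ⊆ Finset.Icc 1 n → I.card ≤ m →
      ∑ i ∈ I, (a i : ℝ) ≤
        f I.card + ∑ i ∈ I, min ((I.card : ℝ) - 1) (a i : ℝ) +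
        ∑ i ∈ Finset.Icc 1 n \ I, min (I.card : ℝ) (a i : ℝ)) ↔
    (∀ k : ℕ, k ≤ min m n →
      ∑ i ∈ Finset.Icc 1 k, (a i : ℝ) ≤
        f k + (k : ℝ) * ((k : ℝ) - 1) +
        ∑ i ∈ Finset.Icc (k + 1) n, min (k : ℝ) (a i : ℝ)) := by
  constructor
  · intro hA k hk
    have h := hA (Finset.Icc 1 k) (Finset.Icc_subset_Icc_right (by omega))
      (by simp; omega)
    rw [Icc_sdiff_prefix, Nat.card_Icc, Nat.add_sub_cancel] at h
    have h2 : ∑ i ∈ Finset.Icc 1 k, min ((k : ℝ) - 1) (a i : ℝ) ≤ (k : ℝ) * ((k : ℝ) - 1) := by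
      have := Finset.sum_le_card_nsmul (Finset.Icc 1 k)
        (fun i => min ((k : ℝ) - 1) (a i : ℝ)) _ (fun i _ => min_le_left _ _)
      simpa using this
    linarith
  · intro hB I hI hIm
    set k := I.card with hk
    set J := I.filter (fun i => (k : ℝ) - 1 ≤ (a i : ℝ)) with hJdef
    have hJI : J ⊆ I := Finset.filter_subset _ _
    have hJk : J.card ≤ k := Finset.card_le_card hJI
    have hJn : J ⊆ Finset.Icc 1 n := hJI.trans hI
    have hjn : J.card ≤ n := by simpa using Finset.card_le_card hJn
    have hR := relaxed_of_prefix n a hmono _ J hJn (hB J.card (le_min (hJk.trans hIm) hjn))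
    have hfk := hf J.card k hJk hIm
    have hkr : (J.card : ℝ) ≤ k := by exact_mod_cast hJk
    have eI := Finset.sum_sdiff (f := fun i => (a i : ℝ)) hJI
    have eM := Finset.sum_sdiff (f := fun i => min ((k : ℝ) - 1) (a i : ℝ)) hJI
    have e1 : ∑ i ∈ J, min ((k : ℝ) - 1) (a i : ℝ) = J.card * ((k : ℝ) - 1) := by
      rw [Finset.sum_congr rfl fun i hi => min_eq_left (Finset.mem_filter.mp hi).2,
        Finset.sum_const, nsmul_eq_mul]
    have e2 : ∑ i ∈ I \ J, min ((k : ℝ) - 1) (a i : ℝ) = ∑ i ∈ I \ J, (a i : ℝ) := by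
      refine Finset.sum_congr rfl fun i hi => min_eq_right ?_
      obtain ⟨hiI, hiJ⟩ := Finset.mem_sdiff.mp hi
      by_contra hlt
      exact hiJ (Finset.mem_filter.mpr ⟨hiI, (not_le.mp hlt).le⟩)
    have e3 : ∑ i ∈ Finset.Icc 1 n \ J, min (J.card : ℝ) (a i : ℝ) =
        ∑ i ∈ Finset.Icc 1 n \ I, min (J.card : ℝ) (a i : ℝ) +
          ∑ i ∈ I \ J, min (J.card : ℝ) (a i : ℝ) := by
      have s1 := Finset.sum_sdiff (f := fun i => min (J.card : ℝ) (a i : ℝ)) hJn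
      have s2 := Finset.sum_sdiff (f := fun i => min (J.card : ℝ) (a i : ℝ)) hI
      have s3 := Finset.sum_sdiff (f := fun i => min (J.card : ℝ) (a i : ℝ)) hJI
      linarith
    have h4 : ∑ i ∈ Finset.Icc 1 n \ I, min (J.card : ℝ) (a i : ℝ) ≤
        ∑ i ∈ Finset.Icc 1 n \ I, min (k : ℝ) (a i : ℝ) :=
      Finset.sum_le_sum fun i _ => min_le_min_right _ hkr
    have h5 : ∑ i ∈ I \ J, min (J.card : ℝ) (a i : ℝ) ≤ ((k : ℝ) - J.card) * J.card := by
      have := Finset.sum_le_card_nsmul (I \ J)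
        (fun i => min (J.card : ℝ) (a i : ℝ)) _ (fun i _ => min_le_left _ _)
      rwa [nsmul_eq_mul, Finset.card_sdiff_of_subset hJI, Nat.cast_sub hJk] at this
    nlinarith
end

section
/- Let d = (d_1, …, d_n) be a non-increasing sequence of positive integers and let ν ≥ 1 with 2ν ≤ n. If there exists a simple graph on vertex set {1, …, n} realizing d that contains a matching of size ν, then there exists a simple graph on vertex set {1, …, n} realizing d that contains a matching of size ν whose set of matched vertices is exactly {1, 2, …, 2ν} (the vertices with the 2ν highest degrees). -/
/-!
Let `G` realize `d` and let a matching of `G` saturate exactly `S`. If `S` is not the prefix, there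
are `v ∈ S` outside the prefix and `u ∉ S` inside it, so `deg u ≥ deg v`. Let `w` be the partner of
`v`. If `u` is adjacent to `w`, the edge `vw` of the matching can be replaced by `uw`. Otherwise,
since `deg u ≥ deg v`, some neighbour `x ≠ v` of `u` is not adjacent to `v`; switching the edges
`vw, ux` to `uw, vx` keeps all degrees, and removes no matching edge but `vw` because `u` is
unmatched. So again `vw` can be replaced by `uw` in the matching. Either way `u` replaces `v` in the
saturated set (`exchange`); each such step lowers the number of saturated vertices outside the
prefix, so finitely many of them reach the prefix.
-/

open Classical in
/-- The degree sequence `d` has a realization with a matching that saturates exactly `S`. The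
matching is encoded by the map `f` sending a vertex of `S` to its partner; the values of `f`
outside `S` are irrelevant. -/
def RealizesSat {V : Type*} [Fintype V] (d : V → ℕ) (S : Finset V) : Prop :=
  ∃ G : SimpleGraph V, (∀ i, G.degree i = d i) ∧
    ∃ f : V → V, ∀ a ∈ S, f a ∈ S ∧ f (f a) = a ∧ G.Adj a (f a)

open Classical in
/-- The 2-switch that removes the edges `vw`, `ux` and adds `uw`, `vx`. -/
lemma exists_switch {V : Type*} [Fintype V] (G : SimpleGraph V) {u v w x : V}
    (huv : u ≠ v) (hwx : w ≠ x) (hvw : G.Adj v w) (hux : G.Adj u x)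
    (huw : ¬ G.Adj u w) (hvx : ¬ G.Adj v x) (huw' : u ≠ w) (hvx' : v ≠ x) :
    ∃ H : SimpleGraph V, (∀ i, H.degree i = G.degree i) ∧ H.Adj u w ∧
      ∀ a b, G.Adj a b → a ≠ u → b ≠ u → s(a, b) ≠ s(v, w) → H.Adj a b := by
  have hvw' := hvw.ne
  have hux' := hux.ne
  obtain ⟨H, hH⟩ : ∃ H : SimpleGraph V, ∀ a b, H.Adj a b ↔
      (G.Adj a b ∧ s(a, b) ≠ s(v, w) ∧ s(a, b) ≠ s(u, x)) ∨
        s(a, b) = s(u, w) ∨ s(a, b) = s(v, x) := by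
    refine ⟨SimpleGraph.mk (fun a b => (G.Adj a b ∧ s(a, b) ≠ s(v, w) ∧ s(a, b) ≠ s(u, x)) ∨
      s(a, b) = s(u, w) ∨ s(a, b) = s(v, x)) ⟨fun a b h => ?_⟩ ⟨fun a h => ?_⟩,
      fun _ _ => Iff.rfl⟩
    · rw [Sym2.eq_swap (a := b), G.adj_comm]
      exact h
    · simp only [SimpleGraph.irrefl, false_and, false_or, Sym2.eq_iff] at h
      grind
  -- At a vertex of the switch, one neighbour `p` is exchanged for a new one `q`.
  have key : ∀ i p q, G.Adj i p → ¬ G.Adj i q →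
      H.neighborFinset i = insert q ((G.neighborFinset i).erase p) → H.degree i = G.degree i := by
    intro i p q hp hq h
    rw [← SimpleGraph.card_neighborFinset_eq_degree, h, Finset.card_insert_of_notMem (by simp [hq]),
      Finset.card_erase_add_one (by simpa using hp), SimpleGraph.card_neighborFinset_eq_degree]
  refine ⟨H, ?_, (hH _ _).2 (.inr (.inl rfl)), ?_⟩
  · intro i
    by_cases hiu : i = u
    · subst hiu
      refine key i x w hux huw ?_
      ext b
      simp only [SimpleGraph.mem_neighborFinset, hH, Finset.mem_insert, Finset.mem_erase, ne_eq,
        Sym2.eq_iff]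
      grind
    by_cases hiv : i = v
    · subst hiv
      refine key i w x hvw hvx ?_
      ext b
      simp only [SimpleGraph.mem_neighborFinset, hH, Finset.mem_insert, Finset.mem_erase, ne_eq,
        Sym2.eq_iff]
      grind
    by_cases hiw : i = w
    · subst hiw
      refine key i v u hvw.symm (fun h => huw h.symm) ?_
      ext b
      simp only [SimpleGraph.mem_neighborFinset, hH, Finset.mem_insert, Finset.mem_erase, ne_eq,
        Sym2.eq_iff]
      grind
    by_cases hix : i = x
    · subst hix
      refine key i u v hux.symm (fun h => hvx h.symm) ?_
      ext b
      simp only [SimpleGraph.mem_neighborFinset, hH, Finset.mem_insert, Finset.mem_erase, ne_eq,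
        Sym2.eq_iff]
      grind
    · rw [← SimpleGraph.card_neighborFinset_eq_degree, ← SimpleGraph.card_neighborFinset_eq_degree]
      congr 1
      ext b
      simp only [SimpleGraph.mem_neighborFinset, hH, ne_eq, Sym2.eq_iff]
      grind
  · intro a b hab hau hbu hne
    refine (hH _ _).2 (.inl ⟨hab, hne, ?_⟩)
    rw [ne_eq, Sym2.eq_iff]
    grind

open Classical in
/-- A saturated vertex can be exchanged for an unsaturated one of at least the same degree. -/
lemma exchange {V : Type*} [Fintype V] {d : V → ℕ} {S : Finset V} {u v : V}
    (h : RealizesSat d S) (hv : v ∈ S) (hu : u ∉ S) (hd : d v ≤ d u) :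
    RealizesSat d (insert u (S.erase v)) := by
  obtain ⟨G, hG, f, hf⟩ := h
  have huv : u ≠ v := by rintro rfl; exact hu hv
  obtain ⟨hwS, hfw, hvw⟩ := hf v hv
  have huw' : u ≠ f v := by intro h; rw [h] at hu; exact hu hwS
  obtain ⟨H, hHd, hHuw, hH⟩ : ∃ H : SimpleGraph V, (∀ i, H.degree i = G.degree i) ∧
      H.Adj u (f v) ∧
      ∀ a b, G.Adj a b → a ≠ u → b ≠ u → s(a, b) ≠ s(v, f v) → H.Adj a b := by
    by_cases huw : G.Adj u (f v)
    · exact ⟨G, fun _ => rfl, huw, fun a b hab _ _ _ => hab⟩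
    obtain ⟨x, hx, hxv, hvx⟩ : ∃ x, G.Adj u x ∧ x ≠ v ∧ ¬ G.Adj v x := by
      by_contra! hcon
      -- Swapping `u` and `v` then embeds `N(u)` into `N(v)`, and the image misses `f v`.
      have hsub : (G.neighborFinset u).image (Equiv.swap u v) ⊆
          (G.neighborFinset v).erase (f v) := by
        intro y hy
        obtain ⟨x, hx, rfl⟩ := Finset.mem_image.1 hy
        rw [SimpleGraph.mem_neighborFinset] at hx
        rw [Finset.mem_erase, SimpleGraph.mem_neighborFinset]
        by_cases hxv : x = v
        · subst hxv
          rw [Equiv.swap_apply_right]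
          exact ⟨huw', hx.symm⟩
        · rw [Equiv.swap_apply_of_ne_of_ne hx.ne' hxv]
          exact ⟨by rintro rfl; exact huw hx, hcon x hx hxv⟩
      have h1 := Finset.card_le_card hsub
      rw [Finset.card_image_of_injective _ (Equiv.injective _)] at h1
      have h2 := Finset.card_erase_lt_of_mem ((G.mem_neighborFinset v (f v)).2 hvw)
      rw [SimpleGraph.card_neighborFinset_eq_degree, hG] at h1 h2
      omega
    exact exists_switch G huv (by rintro rfl; exact huw hx) hvw hx huw hvx huw' hxv.symm
  refine ⟨H, fun i => (hHd i).trans (hG i),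
    fun a => if a = u then f v else if a = f v then u else f a, fun a ha => ?_⟩
  rw [Finset.mem_insert, Finset.mem_erase] at ha
  by_cases hau : a = u
  · subst hau
    have : f v ≠ v := hvw.ne'
    simp [huw'.symm, this, hwS, hHuw]
  by_cases haw : a = f v
  · subst haw
    simp [huw'.symm, hHuw.symm]
  obtain ⟨hav, haS⟩ := ha.resolve_left hau
  obtain ⟨h1, h2, h3⟩ := hf a haS
  have hfau : f a ≠ u := by intro h; rw [h] at h1; exact hu h1
  have hfaw : f a ≠ f v := by
    intro h
    rw [h, hfw] at h2
    exact hav h2.symm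
  have hfav : f a ≠ v := by
    intro h
    rw [h] at h2
    exact haw h2.symm
  simp only [hau, haw, if_false, hfau, hfaw]
  refine ⟨by simp [hfav, h1], h2, hH a (f a) h3 hau hfau ?_⟩
  rw [ne_eq, Sym2.eq_iff]
  grind

/-- Repeated exchange moves the saturated set onto any set `P` of the same size whose vertices have
at least the degrees of those outside `P`. -/
lemma realizesSat_of_dominating {V : Type*} [Fintype V] [DecidableEq V] {d : V → ℕ} {P : Finset V}
    (hP : ∀ u ∈ P, ∀ v ∉ P, d v ≤ d u) (k : ℕ) :
    ∀ S : Finset V, S.card = P.card → (S \ P).card = k → RealizesSat d S → RealizesSat d P := by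
  induction k with
  | zero =>
    intro S hc hk hS
    rw [Finset.card_eq_zero, Finset.sdiff_eq_empty_iff_subset] at hk
    rwa [← Finset.eq_of_subset_of_card_le hk hc.ge]
  | succ k ih =>
    intro S hc hk hS
    obtain ⟨v, hv⟩ := Finset.card_pos.1 (by omega : 0 < (S \ P).card)
    obtain ⟨u, hu⟩ := Finset.card_pos.1
      (by rw [← Finset.card_sdiff_comm hc]; omega : 0 < (P \ S).card)
    rw [Finset.mem_sdiff] at hu
    have hv' := Finset.mem_sdiff.1 hv
    refine ih (insert u (S.erase v)) ?_ ?_ ?_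
    · rw [Finset.card_insert_of_notMem (by simp [hu.2]), Finset.card_erase_add_one hv'.1, hc]
    · have : insert u (S.erase v) \ P = (S \ P).erase v := by
        ext a
        simp only [Finset.mem_sdiff, Finset.mem_insert, Finset.mem_erase]
        have := hv'.2
        clear ih hc hk hS hP
        grind
      rw [this, Finset.card_erase_of_mem hv, hk, Nat.add_sub_cancel]
    · convert exchange hS hv'.1 hu.2 (hP u hu.1 v hv'.2)

/-- **Arbitrary Prefix Lemma for Maximum Matching.**
If a non-increasing positive sequence `d` has a realization with a matching of size
`ν` (a matching of size `ν` saturates exactly `2ν` vertices), then `d` has a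
realization with a matching of size `ν` whose set of matched vertices is exactly
the set of the `2ν` vertices of highest degree, i.e. `{0, …, 2ν−1}` in 0-based
indexing. -/
theorem stmt_9 (n ν : ℕ) (hν : 1 ≤ ν) (h2ν : 2 * ν ≤ n) (d : Fin n → ℕ)
    (hpos : ∀ i, 0 < d i) (hmono : Antitone d)
    (h : ∃ (G : SimpleGraph (Fin n)) (_ : DecidableRel G.Adj),
      (∀ i, G.degree i = d i) ∧
      ∃ M : G.Subgraph, M.IsMatching ∧ M.verts.ncard = 2 * ν) :
    ∃ (G : SimpleGraph (Fin n)) (_ : DecidableRel G.Adj),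
      (∀ i, G.degree i = d i) ∧
      ∃ M : G.Subgraph, M.IsMatching ∧ M.verts = {v : Fin n | v.val < 2 * ν} := by
  classical
  obtain ⟨G, _, hG, M, hM, hc⟩ := h
  have hcard : (Finset.univ.filter fun v : Fin n => v.val < 2 * ν).card = 2 * ν := by
    rw [Fin.card_filter_val_lt]
    exact min_eq_right h2ν
  have hS : RealizesSat d M.verts.toFinset := by
    refine ⟨G, fun i => by convert hG i, ?_⟩
    have : ∀ a, ∃ b, a ∈ M.verts → M.Adj a b := by
      intro a
      by_cases ha : a ∈ M.verts
      · exact (hM ha).exists.imp fun b hb _ => hb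
      · exact ⟨a, fun h => absurd h ha⟩
    choose f hf using this
    refine ⟨f, fun a ha => ?_⟩
    rw [Set.mem_toFinset] at ha ⊢
    have h1 := hf a ha
    have h2 := M.edge_vert h1.symm
    exact ⟨h2, (hM h2).unique (hf _ h2) h1.symm, M.adj_sub h1⟩
  obtain ⟨H, hH, f, hf⟩ := realizesSat_of_dominating (d := d)
    (P := Finset.univ.filter fun v : Fin n => v.val < 2 * ν)
    (fun u hu v hv => hmono (by
      simp only [Finset.mem_filter, Finset.mem_univ, true_and] at hu hv
      exact Fin.le_def.2 (by omega))) _ _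
    (by rw [hcard, ← hc, Set.ncard_eq_toFinset_card']) rfl hS
  simp only [Finset.mem_filter, Finset.mem_univ, true_and] at hf
  refine ⟨H, Classical.decRel _, fun i => by convert hH i,
    { verts := {v : Fin n | v.val < 2 * ν}
      Adj := fun a b => a.val < 2 * ν ∧ f a = b
      adj_sub := ?_
      edge_vert := fun h => h.1
      symm := ?_ }, ?_, rfl⟩
  · rintro a _ ⟨ha, rfl⟩
    exact (hf a ha).2.2
  · constructor
    rintro a _ ⟨ha, rfl⟩
    exact ⟨(hf a ha).1, (hf a ha).2.1⟩
  · intro a ha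
    exact ⟨f a, ⟨ha, rfl⟩, fun b hb => hb.2.symm⟩
end

section
/- Let d = (d_1, …, d_n) be a non-increasing sequence of positive integers, let ν ≥ 1 with 2ν ≤ n, and let G be a simple graph on vertex set {1, …, n} realizing d that contains a matching M of size ν whose set of matched vertices is exactly {1, 2, …, 2ν}. Then there exists a simple graph G' on vertex set {1, …, n} realizing d that contains the inverted matching M^inv = {(i, 2ν − i + 1) : i ∈ {1, …, ν}} as a subset of its edge set. -/
/-!
The inverted matching is built from the outside in. Suppose the matching already pairs `i` with
its mirror image `2ν - 1 - i` for every `i < k`, and put `u = k`, `w = 2ν - 1 - k`. If `u` is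
matched to `a ≠ w` and `w` to `b`, then `a` and `b` lie between `u` and `w`, so `d b ≤ d u` and
`d w ≤ d a`. A single degree-preserving switch (`exists_switch`) makes both `u w` and `a b` edges
while leaving every other matching edge in place:

* if neither is an edge, trade `u a`, `w b` for `u w`, `a b`;
* if only `a b` is an edge, then, since `d b ≤ d u`, some `x ≠ b` is adjacent to `u` but not to
  `b`; trade `w b`, `u x` for `w u`, `b x`;
* if only `u w` is an edge, then, since `d w ≤ d a`, some `x ≠ w` is adjacent to `a` but not to
  `w`; trade `b w`, `a x` for `b a`, `w x`.

In the last two cases the auxiliary edge removed is not a matching edge, because `u` is matched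
to `a ≠ x` (resp. `a` to `u ≠ x`). Re-pairing `u` with `w` and `a` with `b` advances `k`.
-/

/-- The degree-preserving switch: the edges `ab`, `cd` are replaced by the non-edges `ac`, `bd`.
Only what is needed about the new graph is recorded: the two new edges, and the survival of every
edge other than the two removed ones. -/
lemma exists_switch_s10 {V : Type*} [Finite V] (G : SimpleGraph V) {a b c d : V}
    (hab : G.Adj a b) (hcd : G.Adj c d) (hac : ¬ G.Adj a c) (hbd : ¬ G.Adj b d)
    (nac : a ≠ c) (nbd : b ≠ d) :
    ∃ G' : SimpleGraph V, (∀ v, (G'.neighborSet v).ncard = (G.neighborSet v).ncard) ∧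
      G'.Adj a c ∧ G'.Adj b d ∧
      ∀ x y, G.Adj x y → s(x, y) ≠ s(a, b) → s(x, y) ≠ s(c, d) → G'.Adj x y := by
  have hba := hab.symm
  have hdc := hcd.symm
  have hca : ¬ G.Adj c a := fun h => hac h.symm
  have hdb : ¬ G.Adj d b := fun h => hbd h.symm
  have nab := hab.ne
  have ncd := hcd.ne
  have nad : a ≠ d := by rintro rfl; exact hca hcd
  have nbc : b ≠ c := by rintro rfl; exact hac hab
  let G' : SimpleGraph V :=
    { Adj := fun x y => (G.Adj x y ∧ s(x, y) ≠ s(a, b) ∧ s(x, y) ≠ s(c, d)) ∨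
        s(x, y) = s(a, c) ∨ s(x, y) = s(b, d)
      symm := ⟨fun x y h => by rwa [Sym2.eq_swap, G.adj_comm]⟩
      loopless := ⟨fun x h => by
        rcases h with h | h | h
        · exact G.loopless.irrefl x h.1
        · simp only [Sym2.eq_iff] at h; grind
        · simp only [Sym2.eq_iff] at h; grind⟩ }
  have key : ∀ x y, G'.Adj x y ↔ (G.Adj x y ∧ s(x, y) ≠ s(a, b) ∧ s(x, y) ≠ s(c, d)) ∨
        s(x, y) = s(a, c) ∨ s(x, y) = s(b, d) := fun _ _ => Iff.rfl
  refine ⟨G', fun v => ?_, Or.inr (Or.inl rfl), Or.inr (Or.inr rfl),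
    fun x y h h1 h2 => Or.inl ⟨h, h1, h2⟩⟩
  -- At a vertex of the switch one neighbour `q` is exchanged for `p`.
  have exch : ∀ v p q, ¬ G.Adj v p → G.Adj v q →
      (∀ y, G'.Adj v y ↔ y = p ∨ (G.Adj v y ∧ y ≠ q)) →
      (G'.neighborSet v).ncard = (G.neighborSet v).ncard := by
    intro v p q hp hq h
    have : G'.neighborSet v = insert p (G.neighborSet v \ {q}) := by
      ext y
      simp [h]
    rw [this]
    exact Set.ncard_exchange hp hq
  simp only [Sym2.eq_iff, ne_eq] at key
  by_cases va : v = a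
  · subst va
    exact exch v c b hac hab (fun y => by rw [key]; grind)
  by_cases vb : v = b
  · subst vb
    exact exch v d a hbd hba (fun y => by rw [key]; grind)
  by_cases vc : v = c
  · subst vc
    exact exch v a d hca hcd (fun y => by rw [key]; grind)
  by_cases vd : v = d
  · subst vd
    exact exch v b c hdb hdc (fun y => by rw [key]; grind)
  congr 1
  ext y
  simp only [SimpleGraph.mem_neighborSet, key]
  grind

/-- If `q` has at most the degree of `p` and a neighbour `t ≠ p` not shared with `p`, then `p` has
a neighbour `x ≠ q` not shared with `q`. -/
lemma exists_private_neighbor {V : Type*} [Finite V] (G : SimpleGraph V) {p q t : V}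
    (hle : (G.neighborSet q).ncard ≤ (G.neighborSet p).ncard)
    (hqt : G.Adj q t) (hpt : ¬ G.Adj p t) (htp : t ≠ p) :
    ∃ x, G.Adj p x ∧ ¬ G.Adj q x ∧ x ≠ q := by
  by_contra! hcon
  have hss : G.neighborSet p \ {q} ⊂ G.neighborSet q \ {p} := by
    rw [Set.ssubset_iff_of_subset]
    · exact ⟨t, ⟨hqt, htp⟩, fun h => hpt h.1⟩
    · rintro x ⟨hx, hxq⟩
      have hx' : G.Adj p x := hx
      refine ⟨?_, fun h => hx'.ne (Eq.symm h)⟩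
      by_contra h
      exact hxq (hcon x hx' h)
  have hlt := Set.ncard_lt_ncard hss
  by_cases hpq : G.Adj p q
  · have h1 := Set.ncard_sdiff_singleton_add_one (s := G.neighborSet p) (a := q) hpq
    have h2 := Set.ncard_sdiff_singleton_add_one (s := G.neighborSet q) (a := p) hpq.symm
    omega
  · rw [Set.sdiff_singleton_eq_self (by exact hpq),
      Set.sdiff_singleton_eq_self (by exact fun h => hpq (SimpleGraph.Adj.symm h))] at hlt
    omega

/-- `p` is the partner function of a matching of `G` covering exactly the vertices below `m`;
the values of `p` at other vertices are irrelevant. -/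
def IsPartner {n : ℕ} (G : SimpleGraph (Fin n)) (m : ℕ) (p : Fin n → Fin n) : Prop :=
  ∀ v : Fin n, v.val < m → (p v).val < m ∧ p (p v) = v ∧ G.Adj v (p v)

/-- Two matching edges `ua`, `wb` can be re-paired as `uw`, `ab`, at the cost of a
degree-preserving change of the graph, as soon as `b` has at most the degree of `u` and `w` has at
most the degree of `a`. -/
lemma exists_repair {n m : ℕ} (G : SimpleGraph (Fin n)) (p : Fin n → Fin n)
    (hp : IsPartner G m p) {u w : Fin n} (hu : u.val < m) (hw : w.val < m) (huw : u ≠ w)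
    (hne : p u ≠ w)
    (h1 : (G.neighborSet (p w)).ncard ≤ (G.neighborSet u).ncard)
    (h2 : (G.neighborSet w).ncard ≤ (G.neighborSet (p u)).ncard) :
    ∃ G' : SimpleGraph (Fin n), (∀ v, (G'.neighborSet v).ncard = (G.neighborSet v).ncard) ∧
      G'.Adj u w ∧ G'.Adj (p u) (p w) ∧
      ∀ v : Fin n, v.val < m → v ≠ u → v ≠ w → v ≠ p u → v ≠ p w → G'.Adj v (p v) := by
  obtain ⟨ham, hau, hua⟩ := hp u hu
  obtain ⟨hbm, hbw, hwb⟩ := hp w hw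
  have hinv : ∀ v : Fin n, v.val < m → p (p v) = v := fun v hv => (hp v hv).2.1
  generalize hA : p u = a at *
  generalize hB : p w = b at *
  have nab : a ≠ b := by rintro rfl; exact huw (hau.symm.trans hbw)
  have nub : u ≠ b := by rintro rfl; exact hne (hA.symm.trans hbw)
  by_cases e1 : G.Adj u w <;> by_cases e2 : G.Adj a b
  · exact ⟨G, fun _ => rfl, e1, e2, fun v hv _ _ _ _ => (hp v hv).2.2⟩
  · obtain ⟨x, hax, hwx, hxw⟩ := exists_private_neighbor G h2 hwb e2 nab.symm
    have nxu : x ≠ u := by rintro rfl; exact hwx e1.symm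
    obtain ⟨G', hd, ha1, ha2, hk⟩ := exists_switch_s10 G hwb.symm hax (fun h => e2 h.symm) hwx
      nab.symm hxw.symm
    refine ⟨G', hd, hk _ _ e1 ?_ ?_, ha1.symm, fun v hv v1 v2 v3 v4 => hk _ _ (hp v hv).2.2 ?_ ?_⟩
      <;> simp only [ne_eq, Sym2.eq_iff] <;> grind
  · obtain ⟨x, hux, hbx, hxb⟩ := exists_private_neighbor G h1 hwb.symm e1 huw.symm
    have nxa : x ≠ a := by rintro rfl; exact hbx e2.symm
    obtain ⟨G', hd, ha1, ha2, hk⟩ := exists_switch_s10 G hwb hux (fun h => e1 h.symm) hbx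
      huw.symm hxb.symm
    refine ⟨G', hd, ha1.symm, hk _ _ e2 ?_ ?_, fun v hv v1 v2 v3 v4 => hk _ _ (hp v hv).2.2 ?_ ?_⟩
      <;> simp only [ne_eq, Sym2.eq_iff] <;> grind
  · obtain ⟨G', hd, ha1, ha2, hk⟩ := exists_switch_s10 G hua hwb e1 e2 huw nab
    refine ⟨G', hd, ha1, ha2, fun v hv v1 v2 v3 v4 => hk _ _ (hp v hv).2.2 ?_ ?_⟩
      <;> simp only [ne_eq, Sym2.eq_iff] <;> grind

/-- The first `k` vertices can be matched to their mirror images `2ν - 1 - v`. -/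
lemma exists_partial_inversion {n ν : ℕ} (h2ν : 2 * ν ≤ n) (d : Fin n → ℕ) (hmono : Antitone d)
    (G : SimpleGraph (Fin n)) (hdeg : ∀ i, (G.neighborSet i).ncard = d i)
    (p : Fin n → Fin n) (hp : IsPartner G (2 * ν) p) (k : ℕ) (hk : k ≤ ν) :
    ∃ (G' : SimpleGraph (Fin n)) (p' : Fin n → Fin n),
      (∀ i, (G'.neighborSet i).ncard = d i) ∧ IsPartner G' (2 * ν) p' ∧
      ∀ v : Fin n, v.val < k → v.val + (p' v).val = 2 * ν - 1 := by
  induction k with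
  | zero => exact ⟨G, p, hdeg, hp, fun v hv => absurd hv (Nat.not_lt_zero _)⟩
  | succ k ih =>
    obtain ⟨H, q, hHd, hq, hqk⟩ := ih (by omega)
    obtain ⟨u, hu⟩ : ∃ u : Fin n, u.val = k := ⟨⟨k, by omega⟩, rfl⟩
    obtain ⟨w, hw⟩ : ∃ w : Fin n, w.val = 2 * ν - 1 - k := ⟨⟨2 * ν - 1 - k, by omega⟩, rfl⟩
    obtain ⟨ham, hau, hua⟩ := hq u (by omega)
    obtain ⟨hbm, hbw, hwb⟩ := hq w (by omega)
    by_cases hne : q u = w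
    · refine ⟨H, q, hHd, hq, fun v hv => ?_⟩
      by_cases hvk : v.val < k
      · exact hqk v hvk
      · obtain rfl : v = u := Fin.ext (by omega)
        rw [hne]; omega
    -- The partners of `u` and `w` lie outside the part already inverted.
    have hbk : k ≤ (q w).val := by
      by_contra h
      have := hqk (q w) (by omega)
      rw [hbw] at this
      omega
    have hak : (q u).val ≤ w.val := by
      by_contra h
      obtain ⟨c, hc⟩ : ∃ c : Fin n, c.val = 2 * ν - 1 - (q u).val :=
        ⟨⟨2 * ν - 1 - (q u).val, by omega⟩, rfl⟩
      have h3 := hqk c (by omega)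
      have h4 : q c = q u := Fin.ext (by omega)
      have h5 := (hq c (by omega)).2.1
      rw [h4, hau] at h5
      have := congrArg Fin.val h5
      omega
    have huw : u ≠ w := fun h => by have := congrArg Fin.val h; omega
    obtain ⟨G', hd, e1, e2, hrest⟩ := exists_repair H q hq (u := u) (w := w) (by omega) (by omega)
      huw hne
      (by rw [hHd, hHd]; exact hmono (Fin.le_def.2 (by omega)))
      (by rw [hHd, hHd]; exact hmono (Fin.le_def.2 hak))
    refine ⟨G', fun v => if v = u then w else if v = w then u else if v = q u then q w else
      if v = q w then q u else q v, fun i => (hd i).trans (hHd i), fun v hv => ?_, fun v hv => ?_⟩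
    · obtain ⟨hv1, hv2, -⟩ := hq v hv
      have n1 : q u ≠ u := hua.ne'
      have n2 : q w ≠ w := hwb.ne'
      have n3 : q w ≠ u := fun h => hne (by rw [← h, hbw])
      have n4 : q u ≠ q w := fun h => huw (by rw [← hau, h, hbw])
      by_cases vu : v = u
      · subst vu
        simp [huw.symm, e1, hw]; omega
      by_cases vw : v = w
      · subst vw
        simp [huw.symm, e1.symm, hu]; omega
      by_cases va : v = q u
      · subst va
        simp [hne, n1, n2, n3, n4.symm, e2, hbm]
      by_cases vb : v = q w
      · subst vb
        simp [hne, n1, n2, n3, n4.symm, e2.symm, ham]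
      have m1 : q v ≠ u := fun h => va (by rw [← h, hv2])
      have m2 : q v ≠ w := fun h => vb (by rw [← h, hv2])
      have m3 : q v ≠ q u := fun h => vu (by rw [← hv2, h, hau])
      have m4 : q v ≠ q w := fun h => vw (by rw [← hv2, h, hbw])
      simp [vu, vw, va, vb, m1, m2, m3, m4, hv1, hv2, hrest v hv]
    · by_cases hvu : v = u
      · simp only [hvu, if_true]; omega
      · have hvk : v.val < k := by
          have : v.val ≠ u.val := fun h => hvu (Fin.ext h)
          omega
        have hv1 := hqk v hvk
        have hvq := (hq v (by omega)).2.1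
        have n2 : v ≠ w := fun h => by have := congrArg Fin.val h; omega
        have n3 : v ≠ q u := by
          intro h
          rw [h, hau] at hv1
          have := congrArg Fin.val h
          exact hne (Fin.ext (by omega))
        have n4 : v ≠ q w := fun h => by have := congrArg Fin.val h; omega
        simp only [hvu, n2, n3, n4, if_false]
        exact hv1


/-- If `G` realizes the non-increasing positive sequence `d` and contains a matching
`M` of size `ν` whose set of matched vertices is exactly `{0, …, 2ν−1}` (0-based
indexing of the `2ν` highest-degree vertices), then there is a realization `G'` of
`d` containing the inverted matching: for all vertices `a, b` with `a < ν` and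
`a + b = 2ν − 1` (0-based; i.e. the 1-based pairs `(i, 2ν−i+1)` for `i ∈ {1,…,ν}`),
`a` and `b` are adjacent in `G'`. -/
theorem stmt_10 (n ν : ℕ) (hν : 1 ≤ ν) (h2ν : 2 * ν ≤ n) (d : Fin n → ℕ)
    (hpos : ∀ i, 0 < d i) (hmono : Antitone d)
    (G : SimpleGraph (Fin n)) [DecidableRel G.Adj]
    (hdeg : ∀ i, G.degree i = d i)
    (M : G.Subgraph) (hM : M.IsMatching)
    (hverts : M.verts = {v : Fin n | v.val < 2 * ν}) :
    ∃ (G' : SimpleGraph (Fin n)) (_ : DecidableRel G'.Adj),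
      (∀ i, G'.degree i = d i) ∧
      ∀ a b : Fin n, a.val < ν → a.val + b.val = 2 * ν - 1 → G'.Adj a b := by
  classical
  have hM' : ∀ v : Fin n, ∃ w, v.val < 2 * ν → M.Adj v w := by
    intro v
    by_cases hv : v.val < 2 * ν
    · obtain ⟨w, hw, -⟩ := hM (v := v) (by rw [hverts]; exact hv)
      exact ⟨w, fun _ => hw⟩
    · exact ⟨v, fun h => absurd h hv⟩
  choose p hpM using hM'
  have hp : IsPartner G (2 * ν) p := by
    intro v hv
    have hadj := hpM v hv
    have hmem : p v ∈ M.verts := M.edge_vert hadj.symm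
    have hlt : (p v).val < 2 * ν := by rw [hverts] at hmem; exact hmem
    exact ⟨hlt, (hM hmem).unique (hpM _ hlt) hadj.symm, hadj.adj_sub⟩
  have hcard : ∀ (H : SimpleGraph (Fin n)) [DecidableRel H.Adj] (i : Fin n),
      (H.neighborSet i).ncard = H.degree i := by
    intro H _ i
    rw [← SimpleGraph.card_neighborSet_eq_degree, ← Nat.card_eq_fintype_card,
      Nat.card_coe_set_eq]
  obtain ⟨G', q, hd, hq, hinv⟩ := exists_partial_inversion h2ν d hmono G
    (fun i => (hcard G i).trans (hdeg i)) p hp ν le_rfl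
  refine ⟨G', Classical.decRel _, fun i => ?_, fun a b ha hab => ?_⟩
  · rw [← hcard, hd]
  · have h := hinv a ha
    have hb : q a = b := Fin.ext (by omega)
    exact hb ▸ (hq a (by omega)).2.2
end

section
/- Let d = (d_1, …, d_n) be a non-increasing sequence of positive integers and let ν ≥ 1 with 2ν ≤ n. If there exists a simple graph on vertex set {1, …, n} realizing d that contains a matching of size ν, then there exists a simple graph G' on vertex set {1, …, n} realizing d whose edge set contains the matching M' = {(i, 2ν − i + 1) : i ∈ {1, …, ν}}. -/
/-!
A matching inside a graph `G` is encoded by an involution `f` of the vertices such that every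
non-fixed point `i` is adjacent to `f i`; the matched vertices are the non-fixed points. Everything
rests on one exchange principle (`exists_transfer`): if `deg v ≤ deg u` and `w` is a neighbour of
`v` but not of `u`, then some neighbour `x` of `u` is not a neighbour of `v`, and replacing the
edges `ux`, `vw` by `uw`, `vx` preserves all degrees.

* If `u` is unmatched, `v` is matched to `w` and `deg v ≤ deg u`, then the edge `vw` of the matching
  can be replaced by `uw`, after an exchange if `uw` is not an edge (`exists_move`). Repeating this
  makes the matching cover exactly the first `2ν` vertices (`exists_prefix`).
* If `up` and `vw` are matching edges with `deg v ≤ deg u` and `deg w ≤ deg p`, they can be replaced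
  by `uw` and `vp` (`exists_cross`): if exactly one of these two is missing, an exchange creates it
  without touching the other, and if both are missing, a single 2-switch creates both.
  Applied with `p = k` and `v = 2ν - 1 - k` for `k = 0, 1, …`, this pairs the largest remaining
  degree with the smallest remaining one (`exists_inverted`).
-/

open Classical in
/-- `G` has degree sequence `d`, with degrees computed using classical decidability. -/
def Realizes {n : ℕ} (G : SimpleGraph (Fin n)) (d : Fin n → ℕ) : Prop :=
  ∀ i, G.degree i = d i

/-- The involution `f` encodes a matching of `G`: its 2-cycles are edges of `G`, and its fixed
points are the unmatched vertices. -/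
structure Encodes {n : ℕ} (G : SimpleGraph (Fin n)) (f : Fin n → Fin n) : Prop where
  invol : ∀ i, f (f i) = i
  adj : ∀ i, f i ≠ i → G.Adj i (f i)

/-- The involution `f` conjugated by the transposition of `u` and `v`. -/
def conjSwap {n : ℕ} (f : Fin n → Fin n) (u v : Fin n) : Fin n → Fin n :=
  fun i => Equiv.swap u v (f (Equiv.swap u v i))

/-- The 2-switch: replacing the edges `ab`, `ce` by the non-edges `ac`, `be` preserves degrees. -/
lemma exists_switch_s11 {n : ℕ} {G : SimpleGraph (Fin n)} {d : Fin n → ℕ} (hG : Realizes G d)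
    {a b c e : Fin n} (hab : G.Adj a b) (hce : G.Adj c e) (hac : ¬ G.Adj a c)
    (hbe : ¬ G.Adj b e) (nac : a ≠ c) (nbe : b ≠ e) :
    ∃ G' : SimpleGraph (Fin n), Realizes G' d ∧ G'.Adj a c ∧ G'.Adj b e ∧
      ∀ p q, G.Adj p q → s(p, q) ≠ s(a, b) → s(p, q) ≠ s(c, e) → G'.Adj p q := by
  classical
  have nab := hab.ne
  have nce := hce.ne
  have nae : a ≠ e := by rintro rfl; exact hac hce.symm
  have nbc : b ≠ c := by rintro rfl; exact hac hab
  let G' : SimpleGraph (Fin n) :=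
    { Adj := fun p q => (G.Adj p q ∧ s(p, q) ≠ s(a, b) ∧ s(p, q) ≠ s(c, e)) ∨
        s(p, q) = s(a, c) ∨ s(p, q) = s(b, e)
      symm := ⟨fun p q h => by rwa [G.adj_comm, Sym2.eq_swap] at h⟩
      loopless := ⟨fun p h => by
        rcases h with h | h | h
        · exact G.loopless.irrefl p h.1
        · simp only [Sym2.eq_iff] at h; grind
        · simp only [Sym2.eq_iff] at h; grind⟩ }
  have hadj : ∀ p q, G'.Adj p q ↔ (G.Adj p q ∧ s(p, q) ≠ s(a, b) ∧ s(p, q) ≠ s(c, e)) ∨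
        s(p, q) = s(a, c) ∨ s(p, q) = s(b, e) := fun _ _ => Iff.rfl
  clear_value G'
  -- At each switched vertex `z`, one neighbour `x` is traded for a non-neighbour `y`.
  have key : ∀ z x y : Fin n, G.Adj z x → ¬ G.Adj z y →
      (∀ q, G'.Adj z q ↔ (G.Adj z q ∧ q ≠ x) ∨ q = y) → G'.degree z = G.degree z := by
    intro z x y hx hy h
    have : G'.neighborFinset z = insert y ((G.neighborFinset z).erase x) := by
      ext q
      simp only [SimpleGraph.mem_neighborFinset, Finset.mem_insert, Finset.mem_erase, h]
      tauto
    have hpos : 0 < (G.neighborFinset z).card :=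
      Finset.card_pos.2 ⟨x, by simpa using hx⟩
    rw [← SimpleGraph.card_neighborFinset_eq_degree, ← SimpleGraph.card_neighborFinset_eq_degree,
      this, Finset.card_insert_of_notMem (by simp [hy]),
      Finset.card_erase_of_mem (by simpa using hx)]
    omega
  refine ⟨G', fun z => ?_, (hadj _ _).2 (by simp), (hadj _ _).2 (by simp),
    fun p q h h1 h2 => (hadj _ _).2 (Or.inl ⟨h, h1, h2⟩)⟩
  rw [← hG z]
  simp only [Sym2.eq_iff, ne_eq] at hadj
  by_cases hza : z = a
  · subst hza
    exact key z b c hab hac (fun q => by rw [hadj]; grind)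
  by_cases hzb : z = b
  · subst hzb
    exact key z a e hab.symm hbe (fun q => by rw [hadj]; grind)
  by_cases hzc : z = c
  · subst hzc
    exact key z e a hce (fun h => hac h.symm) (fun q => by rw [hadj]; grind)
  by_cases hze : z = e
  · subst hze
    exact key z c b hce.symm (fun h => hbe h.symm) (fun q => by rw [hadj]; grind)
  have : G'.neighborFinset z = G.neighborFinset z := by
    ext q
    simp only [SimpleGraph.mem_neighborFinset, hadj]
    grind
  rw [← SimpleGraph.card_neighborFinset_eq_degree, ← SimpleGraph.card_neighborFinset_eq_degree,
    this]

/-- If `deg v ≤ deg u`, a neighbour `w` of `v` can be made a neighbour of `u` at the cost of the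
edges `vw` and `ux` only, where `x` is some vertex not adjacent to `v`. -/
lemma exists_transfer {n : ℕ} {G : SimpleGraph (Fin n)} {d : Fin n → ℕ} (hG : Realizes G d)
    {u v w : Fin n} (hd : d v ≤ d u) (hvw : G.Adj v w) (huw : ¬ G.Adj u w) (nuw : u ≠ w) :
    ∃ G' : SimpleGraph (Fin n), Realizes G' d ∧ G'.Adj u w ∧ ∃ x, G.Adj u x ∧ ¬ G.Adj v x ∧
      ∀ p q, G.Adj p q → s(p, q) ≠ s(u, x) → s(p, q) ≠ s(v, w) → G'.Adj p q := by
  classical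
  have : ∃ x, G.Adj u x ∧ ¬ G.Adj v x ∧ x ≠ v := by
    by_contra! hcon
    -- Otherwise `N(u) \ {v}` and `w` all lie in `N(v) \ {u}`, which is too small.
    have hsub : insert w ((G.neighborFinset u).erase v) ⊆ (G.neighborFinset v).erase u := by
      intro q hq
      simp only [SimpleGraph.mem_neighborFinset, Finset.mem_insert, Finset.mem_erase] at hq ⊢
      have := G.ne_of_adj (a := u) (b := q)
      have := hcon q
      grind
    have hle := Finset.card_le_card hsub
    rw [Finset.card_insert_of_notMem (by simp [huw])] at hle
    have h1 := hG u
    have h2 := hG v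
    rw [← SimpleGraph.card_neighborFinset_eq_degree] at h1 h2
    have hc := G.adj_comm u v
    simp only [Finset.card_erase_eq_ite, SimpleGraph.mem_neighborFinset, ← hc] at hle
    have hpos : 0 < (G.neighborFinset v).card := Finset.card_pos.2 ⟨w, by simpa using hvw⟩
    split_ifs at hle <;> omega
  obtain ⟨x, hux, hvx, nxv⟩ := this
  obtain ⟨G', h1, h2, -, h4⟩ := exists_switch_s11 hG hux hvw.symm huw (fun h => hvx h.symm) nuw nxv
  exact ⟨G', h1, h2, x, hux, hvx, fun p q h h' h'' => h4 p q h h' (by rwa [Sym2.eq_swap (a := w)])⟩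

lemma conjSwap_invol {n : ℕ} {f : Fin n → Fin n} (hf : ∀ i, f (f i) = i) (u v i : Fin n) :
    conjSwap f u v (conjSwap f u v i) = i := by
  simp [conjSwap, hf]

/-- An unmatched vertex `u` can take the place of a matched vertex `v` of no larger degree. -/
lemma exists_move {n : ℕ} {G : SimpleGraph (Fin n)} {d : Fin n → ℕ} (hG : Realizes G d)
    {f : Fin n → Fin n} (hf : Encodes G f) {u v : Fin n} (hd : d v ≤ d u) (hu : f u = u)
    (hv : f v ≠ v) :
    ∃ G' : SimpleGraph (Fin n), Realizes G' d ∧ Encodes G' (conjSwap f u v) := by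
  have inv := hf.invol
  have hvw := hf.adj v hv
  have nuw : u ≠ f v := by grind
  -- It suffices to have the edge `u (f v)` and the old matching edges other than `v (f v)`.
  have main : ∀ G' : SimpleGraph (Fin n), G'.Adj u (f v) →
      (∀ i, f i ≠ i → i ≠ v → i ≠ f v → G'.Adj i (f i)) → Encodes G' (conjSwap f u v) := by
    intro G' h1 h2
    refine ⟨conjSwap_invol inv u v, fun i hi => ?_⟩
    have h1' := h1.symm
    have := h2 i
    simp only [conjSwap, Equiv.swap_apply_def] at hi ⊢
    grind
  by_cases huw : G.Adj u (f v)
  · exact ⟨G, hG, main G huw fun i hi _ _ => hf.adj i hi⟩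
  · obtain ⟨G', h1, h2, x, hux, hvx, h3⟩ := exists_transfer hG hd hvw huw nuw
    refine ⟨G', h1, main G' h2 fun i hi hiv hiw => h3 _ _ (hf.adj i hi) ?_ ?_⟩ <;>
    · simp only [ne_eq, Sym2.eq_iff]
      grind

/-- Two matching edges `u (f u)`, `v (f v)` can be replaced by `u (f v)`, `v (f u)` when
`deg v ≤ deg u` and `deg (f v) ≤ deg (f u)`. -/
lemma exists_cross {n : ℕ} {G : SimpleGraph (Fin n)} {d : Fin n → ℕ} (hG : Realizes G d)
    {f : Fin n → Fin n} (hf : Encodes G f) {u v : Fin n} (hd : d v ≤ d u)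
    (hd' : d (f v) ≤ d (f u)) (hu : f u ≠ u) (hv : f v ≠ v) (huv : u ≠ v) (hfv : f u ≠ v) :
    ∃ G' : SimpleGraph (Fin n), Realizes G' d ∧ Encodes G' (conjSwap f u v) := by
  have inv := hf.invol
  have hup := hf.adj u hu
  have hvw := hf.adj v hv
  have nuw : u ≠ f v := by grind
  have npw : f u ≠ f v := by grind
  -- It suffices to have both new edges and the old matching edges away from `u` and `v`.
  have main : ∀ G' : SimpleGraph (Fin n), G'.Adj u (f v) → G'.Adj v (f u) →
      (∀ i, f i ≠ i → i ≠ v → i ≠ f v → i ≠ u → i ≠ f u → G'.Adj i (f i)) →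
      Encodes G' (conjSwap f u v) := by
    intro G' h1 h1v h2
    refine ⟨conjSwap_invol inv u v, fun i hi => ?_⟩
    have h1' := h1.symm
    have h1v' := h1v.symm
    have := h2 i
    simp only [conjSwap, Equiv.swap_apply_def] at hi ⊢
    grind
  by_cases huw : G.Adj u (f v) <;> by_cases hvp : G.Adj v (f u)
  · exact ⟨G, hG, main G huw hvp fun i hi _ _ _ _ => hf.adj i hi⟩
  · -- Here `f u` takes the neighbour `v` of `f v`; the lost edge at `f u` does not lead to `u`.
    obtain ⟨G', h1, h2, x, hux, hvx, h3⟩ :=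
      exists_transfer hG hd' hvw.symm (fun h => hvp h.symm) hfv
    have nxu : x ≠ u := by rintro rfl; exact hvx huw.symm
    refine ⟨G', h1, main G' (h3 _ _ huw ?_ ?_) h2.symm
      fun i hi _ _ _ _ => h3 _ _ (hf.adj i hi) ?_ ?_⟩ <;>
    · simp only [ne_eq, Sym2.eq_iff]
      grind
  · -- Here `u` takes the neighbour `f v` of `v`; the lost edge at `u` does not lead to `f u`.
    obtain ⟨G', h1, h2, x, hux, hvx, h3⟩ := exists_transfer hG hd hvw huw nuw
    have nxp : x ≠ f u := by rintro rfl; exact hvx hvp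
    refine ⟨G', h1, main G' h2 (h3 _ _ hvp ?_ ?_)
      fun i hi _ _ _ _ => h3 _ _ (hf.adj i hi) ?_ ?_⟩ <;>
    · simp only [ne_eq, Sym2.eq_iff]
      grind
  · obtain ⟨G', h1, h2, h2', h3⟩ :=
      exists_switch_s11 hG hup hvw.symm huw (fun h => hvp h.symm) nuw hfv
    refine ⟨G', h1, main G' h2 h2'.symm fun i hi _ _ _ _ => h3 _ _ (hf.adj i hi) ?_ ?_⟩ <;>
    · simp only [ne_eq, Sym2.eq_iff]
      grind

/-- A matching with `m` matched vertices can be moved onto the first `m` vertices. -/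
lemma exists_prefix {n m : ℕ} {d : Fin n → ℕ} (hm : m ≤ n) (hmono : Antitone d) (k : ℕ) :
    ∀ (G : SimpleGraph (Fin n)) (f : Fin n → Fin n), Realizes G d → Encodes G f →
      (Finset.univ.filter fun i => f i ≠ i).card = m →
      (Finset.univ.filter fun i : Fin n => i.val < m ∧ f i = i).card = k →
      ∃ (G' : SimpleGraph (Fin n)) (f' : Fin n → Fin n), Realizes G' d ∧ Encodes G' f' ∧
        ∀ i, f' i ≠ i ↔ i.val < m := by
  induction k with
  | zero =>
    intro G f hG hf hcard hk
    refine ⟨G, f, hG, hf, ?_⟩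
    have hsub : (Finset.univ.filter fun i : Fin n => i.val < m) ⊆
        Finset.univ.filter fun i => f i ≠ i := by
      intro i hi
      rw [Finset.card_eq_zero, Finset.filter_eq_empty_iff] at hk
      have := hk (Finset.mem_univ i)
      simp at hi ⊢
      tauto
    have heq := Finset.eq_of_subset_of_card_le hsub (by
      rw [hcard, Fin.card_filter_val_lt]; omega)
    intro i
    have := congrArg (fun s => i ∈ s) heq
    simpa using this.symm
  | succ k ih =>
    intro G f hG hf hcard hk
    obtain ⟨u, hu⟩ : (Finset.univ.filter fun i : Fin n => i.val < m ∧ f i = i).Nonempty := by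
      rw [← Finset.card_pos]; omega
    simp only [Finset.mem_filter, Finset.mem_univ, true_and] at hu
    obtain ⟨v, hvm, hv⟩ : ∃ v : Fin n, m ≤ v.val ∧ f v ≠ v := by
      by_contra! hcon
      -- Otherwise all `m` matched vertices lie in the prefix and avoid `u`.
      have hsub : (Finset.univ.filter fun i => f i ≠ i) ⊂
          Finset.univ.filter fun i : Fin n => i.val < m := by
        rw [Finset.ssubset_iff_of_subset]
        · exact ⟨u, by simp [hu.1], by simp [hu.2]⟩
        · intro i hi
          have := hcon i
          simp at hi ⊢
          grind
      have := Finset.card_lt_card hsub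
      rw [hcard, Fin.card_filter_val_lt] at this
      omega
    obtain ⟨G', h1, h2⟩ := exists_move hG hf (hmono (by rw [Fin.le_def]; omega : u ≤ v)) hu.2 hv
    have hfix : ∀ i, conjSwap f u v i = i ↔ f (Equiv.swap u v i) = Equiv.swap u v i := by
      intro i
      rw [conjSwap, Equiv.swap_apply_eq_iff]
    refine ih G' _ h1 h2 ?_ ?_
    · rw [← hcard]
      exact Finset.card_equiv (Equiv.swap u v) (by simp [hfix])
    · have : (Finset.univ.filter fun i : Fin n => i.val < m ∧ conjSwap f u v i = i) =
          (Finset.univ.filter fun i : Fin n => i.val < m ∧ f i = i).erase u := by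
        ext i
        simp only [Finset.mem_filter, Finset.mem_univ, true_and, Finset.mem_erase, hfix,
          Equiv.swap_apply_def]
        grind
      rw [this, Finset.card_erase_of_mem (by simp [hu]), hk]
      rfl

/-- A matching on the first `2ν` vertices can be rearranged so that its first `k` vertices are
matched to the last `k` ones in reverse order. -/
lemma exists_inverted {n ν : ℕ} {d : Fin n → ℕ} (h2ν : 2 * ν ≤ n) (hmono : Antitone d)
    (h0 : ∃ (G : SimpleGraph (Fin n)) (f : Fin n → Fin n), Realizes G d ∧ Encodes G f ∧
        ∀ i, f i ≠ i ↔ i.val < 2 * ν) (k : ℕ) (hk : k ≤ ν) :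
    ∃ (G : SimpleGraph (Fin n)) (f : Fin n → Fin n), Realizes G d ∧ Encodes G f ∧
        (∀ i, f i ≠ i ↔ i.val < 2 * ν) ∧
        ∀ i : Fin n, i.val < k → (f i).val = 2 * ν - 1 - i.val := by
  induction k with
  | zero =>
    obtain ⟨G, f, h1, h2, h3⟩ := h0
    exact ⟨G, f, h1, h2, h3, by simp⟩
  | succ k ih =>
    obtain ⟨G, f, hG, hf, hs, hi⟩ := ih (by omega)
    have inv := hf.invol
    obtain ⟨a, ha⟩ : ∃ a : Fin n, a.val = k := ⟨⟨k, by omega⟩, rfl⟩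
    obtain ⟨z, hz⟩ : ∃ z : Fin n, z.val = 2 * ν - 1 - k := ⟨⟨2 * ν - 1 - k, by omega⟩, rfl⟩
    by_cases haz : f a = z
    · refine ⟨G, f, hG, hf, hs, fun i hik => ?_⟩
      rcases Nat.lt_succ_iff_lt_or_eq.1 hik with h | h
      · exact hi i h
      · obtain rfl : i = a := Fin.ext (by omega)
        rw [haz, hz, h]
    have hsa : f a ≠ a := (hs a).2 (by omega)
    have hsz : f z ≠ z := (hs z).2 (by omega)
    have hlt : ∀ i, f i ≠ i → (f i).val < 2 * ν := fun i h => (hs _).1 (by rw [inv]; exact h.symm)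
    -- The partners of `a` and `z` lie in the part `[k, 2ν - 1 - k]` not yet arranged.
    have hfa : (f a).val ≤ z.val := by
      by_contra! hcon
      have h1 := hlt a hsa
      obtain ⟨j, hj⟩ : ∃ j : Fin n, j.val = 2 * ν - 1 - (f a).val := ⟨⟨_, by omega⟩, rfl⟩
      have h2 := hi j (by omega)
      have h3 : f j = f a := Fin.ext (by omega)
      have h4 : j = a := by rw [← inv j, h3, inv]
      subst h4
      omega
    have hfz : a.val ≤ (f z).val := by
      by_contra! hcon
      have h2 := hi (f z) (by omega)
      rw [inv] at h2
      omega
    obtain ⟨G', h1, h2⟩ := exists_cross hG hf (u := f a) (v := z) (hmono hfa)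
      (by rw [inv]; exact hmono hfz) (by rw [inv]; exact hsa.symm) hsz haz
      (by rw [inv]; intro h; have := congrArg Fin.val h; omega)
    refine ⟨G', _, h1, h2, fun i => ?_, fun i hik => ?_⟩
    · have hfix : conjSwap f (f a) z i = i ↔
          f (Equiv.swap (f a) z i) = Equiv.swap (f a) z i := by
        rw [conjSwap, Equiv.swap_apply_eq_iff]
      rw [ne_eq, hfix, ← ne_eq, hs, Equiv.swap_apply_def]
      have := hlt a hsa
      split_ifs with h h' <;> subst_vars <;> omega
    · have ha' : i.val < k ∨ i = a := by
        rcases Nat.lt_succ_iff_lt_or_eq.1 hik with h | h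
        · exact Or.inl h
        · exact Or.inr (Fin.ext (by omega))
      rcases ha' with h | rfl
      · have h5 := hi i h
        have n1 : i ≠ f a := by
          rintro rfl
          rw [inv] at h5
          omega
        have n2 : i ≠ z := by rintro rfl; omega
        have n3 : f i ≠ f a := by
          intro h'
          have : i = a := by rw [← inv i, h', inv]
          subst this; omega
        have n4 : f i ≠ z := by intro h'; rw [h'] at h5; omega
        rw [conjSwap, Equiv.swap_apply_of_ne_of_ne n1 n2, Equiv.swap_apply_of_ne_of_ne n3 n4, h5]
      · have n2 : i ≠ z := by intro h; have := congrArg Fin.val h; omega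
        rw [conjSwap, Equiv.swap_apply_of_ne_of_ne hsa.symm n2, Equiv.swap_apply_left, hz, ha]

/-- A matching subgraph is encoded by an involution with the same matched vertices. -/
lemma exists_encodes {n : ℕ} {G : SimpleGraph (Fin n)} {M : G.Subgraph} (hM : M.IsMatching) :
    ∃ f : Fin n → Fin n, Encodes G f ∧ ∀ i, f i ≠ i ↔ i ∈ M.verts := by
  classical
  choose g hg hg' using fun (v : Fin n) (hv : v ∈ M.verts) => hM hv
  have hadj : ∀ v hv, M.Adj v (g v hv) := hg
  have huniq : ∀ v hv w, M.Adj v w → w = g v hv := fun v hv w h => hg' v hv w h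
  have hne : ∀ v hv, g v hv ≠ v := fun v hv => (M.adj_sub (hadj v hv)).ne'
  refine ⟨fun i => if h : i ∈ M.verts then g i h else i, ⟨fun i => ?_, fun i hi => ?_⟩, fun i => ?_⟩
  · by_cases h : i ∈ M.verts
    · have h' : g i h ∈ M.verts := M.edge_vert (hadj i h).symm
      simp only [h, dif_pos, h']
      exact (huniq _ _ _ (hadj i h).symm).symm
    · simp [h]
  · by_cases h : i ∈ M.verts
    · simp only [h, dif_pos]
      exact M.adj_sub (hadj i h)
    · simp [h] at hi
  · by_cases h : i ∈ M.verts
    · simp [h, hne]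
    · simp [h]

/-- **Inverted Prefix Lemma for Maximum Matching.**
If a non-increasing positive sequence `d` has a realization with a matching of size
`ν` (a matching of size `ν` saturates exactly `2ν` vertices), then `d` has a
realization `G'` whose edge set contains the inverted matching: for all vertices
`a, b` with `a < ν` and `a + b = 2ν − 1` (0-based; i.e. the 1-based pairs
`(i, 2ν−i+1)` for `i ∈ {1,…,ν}`), `a` and `b` are adjacent in `G'`. -/
theorem stmt_11 (n ν : ℕ) (hν : 1 ≤ ν) (h2ν : 2 * ν ≤ n) (d : Fin n → ℕ)
    (hpos : ∀ i, 0 < d i) (hmono : Antitone d)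
    (h : ∃ (G : SimpleGraph (Fin n)) (_ : DecidableRel G.Adj),
      (∀ i, G.degree i = d i) ∧
      ∃ M : G.Subgraph, M.IsMatching ∧ M.verts.ncard = 2 * ν) :
    ∃ (G' : SimpleGraph (Fin n)) (_ : DecidableRel G'.Adj),
      (∀ i, G'.degree i = d i) ∧
      ∀ a b : Fin n, a.val < ν → a.val + b.val = 2 * ν - 1 → G'.Adj a b := by
  classical
  obtain ⟨G, inst, hdeg, M, hM, hcard⟩ := h
  have hG : Realizes G d := fun i => by
    rw [← hdeg i]
    convert rfl
  obtain ⟨f, hf, hs⟩ := exists_encodes hM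
  have hc : (Finset.univ.filter fun i => f i ≠ i).card = 2 * ν := by
    rw [← hcard, ← Set.ncard_coe_finset]
    congr 1
    ext i
    simpa using hs i
  obtain ⟨G', f', hG', hf', hs', hinv⟩ :=
    exists_inverted h2ν hmono (exists_prefix h2ν hmono _ G f hG hf hc rfl) ν le_rfl
  refine ⟨G', Classical.decRel _, fun i => ?_, fun a b ha hab => ?_⟩
  · rw [← hG' i]
  · have hb : f' a = b := Fin.ext (by rw [hinv a ha]; omega)
    rw [← hb]
    exact hf'.adj a ((hs' a).2 (by omega))
end

section
/- Let G be a finite simple graph in which every vertex has even degree, and let the vertex set of G be partitioned into two sets D and S. If a vertex s ∈ S has at least three neighbors in D, then there exist vertices a, b ∈ D and a vertex c of G such that a, s, b, c are pairwise distinct and (a, s), (s, b), (b, c) are all edges of G (i.e., G contains a 2-dom path P[a, s, b, c]). -/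
/-- In a finite simple graph `G` whose every vertex has even degree, with vertex set
partitioned into dominators `D` and nondominators `S`: if a vertex `s ∈ S` has at
least three neighbors in `D`, then `G` contains a 2-dom path `P[a, s, b, c]`, i.e.
there are `a, b ∈ D` and a vertex `c`, with `a, s, b, c` pairwise distinct, such
that `(a, s)`, `(s, b)` and `(b, c)` are all edges of `G`. -/
theorem stmt_16 {V : Type*} [Fintype V] [DecidableEq V]
    (G : SimpleGraph V) [DecidableRel G.Adj]
    (heven : ∀ v : V, Even (G.degree v))
    (D S : Finset V) (hunion : D ∪ S = Finset.univ) (hdisj : Disjoint D S)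
    (s : V) (hs : s ∈ S)
    (h3 : 3 ≤ ((G.neighborFinset s).filter fun u => u ∈ D).card) :
    ∃ a b c : V, a ∈ D ∧ b ∈ D ∧
      a ≠ s ∧ a ≠ b ∧ a ≠ c ∧ s ≠ b ∧ s ≠ c ∧ b ≠ c ∧
      G.Adj a s ∧ G.Adj s b ∧ G.Adj b c := by
  have hs_card : 0 < ((G.neighborFinset s).filter fun u => u ∈ D).card := by omega
  obtain ⟨b, hb⟩ := Finset.card_pos.mp hs_card
  simp only [Finset.mem_filter, SimpleGraph.mem_neighborFinset] at hb
  obtain ⟨hsb, hbD⟩ := hb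
  -- The degree of `b` is positive and even, so `b` has a neighbor `c` other than `s`.
  have hdeg : 1 < (G.neighborFinset b).card := by
    have hpos : 0 < G.degree b := (G.degree_pos_iff_exists_adj b).mpr ⟨s, hsb.symm⟩
    obtain ⟨k, hk⟩ := heven b
    rw [SimpleGraph.card_neighborFinset_eq_degree]
    omega
  obtain ⟨c, hc, hcs⟩ := Finset.exists_mem_ne hdeg s
  rw [SimpleGraph.mem_neighborFinset] at hc
  -- Three neighbors of `s` in `D` leave one outside `{b, c}`.
  obtain ⟨a, ha, habc⟩ := Finset.exists_mem_notMem_of_card_lt_card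
    (lt_of_le_of_lt (Finset.card_le_two (a := b) (b := c)) h3)
  simp only [Finset.mem_filter, SimpleGraph.mem_neighborFinset] at ha
  simp only [Finset.mem_insert, Finset.mem_singleton, not_or] at habc
  exact ⟨a, b, c, ha.2, hbD, ha.1.ne', habc.1, habc.2, hsb.ne, hcs.symm, hc.ne,
    ha.1.symm, hsb, hc⟩
end
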